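/- There exists a constant C > 0, depending only on d and α, such that for every ε ∈ (0,1/20) and every x ∈ Π_ε ∩ F: the fractional Laplacian Δ^{α/2}(h·s_ε)(x) exists and |Δ^{α/2}(h·s_ε)(x) + h(x)| ≤ C·ω(ε). -/

import Mathlib

open MeasureTheory Metric Real Set Filter RealInnerProductSpace
open scoped ENNReal

noncomputable section

/-- Euclidean space ℝ^d. -/
abbrev Ed (d : ℕ) := EuclideanSpace ℝ (Fin d)

/-- The constant `A_{d,α}`. -/
noncomputable def fracConst (d : ℕ) (α : ℝ) : ℝ :=
  α * 2 ^ (α - 1) * π ^ (-(d : ℝ) / 2) * Real.Gamma (((d : ℝ) + α) / 2) / Real.Gamma (1 - α / 2)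

/-- The fractional Laplacian `Δ^{α/2} Φ (x)` exists and equals `L`. -/
def fracLapAt (d : ℕ) (α : ℝ) (Φ : Ed d → ℝ) (x : Ed d) (L : ℝ) : Prop :=
  Filter.Tendsto
    (fun ε : ℝ => fracConst d α *
      ∫ y in {y : Ed d | ε < ‖y - x‖}, (Φ y - Φ x) * ‖y - x‖ ^ (-(d : ℝ) - α))
    (nhdsWithin 0 (Set.Ioi 0)) (nhds L)

/-- The last coordinate of a vector in ℝ^d. -/
def lastCoord (d : ℕ) (x : Ed d) : ℝ :=
  if h : 0 < d then x ⟨d - 1, Nat.sub_lt h Nat.one_pos⟩ else 0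

/-- The unit vector `e_d = (0,…,0,1)`. -/
def eLast (d : ℕ) : Ed d :=
  if h : 0 < d then EuclideanSpace.single ⟨d - 1, Nat.sub_lt h Nat.one_pos⟩ (1 : ℝ) else 0

/-- The right circular cone `Γ_Θ` of angle `Θ`. -/
def cone (d : ℕ) (Θ : ℝ) : Set (Ed d) := {x | ‖x‖ * Real.cos Θ < lastCoord d x}

/-- The unit sphere `S^{d-1}` in ℝ^d. -/
def unitSphere (d : ℕ) : Set (Ed d) := Metric.sphere (0 : Ed d) 1

/-- The spherical cap `B_Θ`. -/
def capB (d : ℕ) (Θ : ℝ) : Set (Ed d) := {θ | θ ∈ unitSphere d ∧ Real.cos Θ < lastCoord d θ}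

/-- The surface measure `σ`: the (d-1)-dimensional Hausdorff measure. -/
noncomputable def sphMeasure (d : ℕ) : Measure (Ed d) := μH[(d : ℝ) - 1]

/-- The kernel `u_λ(t)`. -/
noncomputable def uKernel (d : ℕ) (α lam t : ℝ) : ℝ :=
  ∫ r in Set.Ioi (0 : ℝ), r ^ ((d : ℝ) + lam - 1) * (r ^ 2 - 2 * r * t + 1) ^ (-((d : ℝ) + α) / 2)

/-- The kernel `u_λ(t)` as a value in `[0,∞]`. -/
noncomputable def uKernelE (d : ℕ) (α lam t : ℝ) : ℝ≥0∞ :=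
  ∫⁻ r in Set.Ioi (0 : ℝ),
    ENNReal.ofReal (r ^ ((d : ℝ) + lam - 1) * (r ^ 2 - 2 * r * t + 1) ^ (-((d : ℝ) + α) / 2))

/-- The spherical fractional Laplacian `Δ_S^{α/2} φ (η)` exists and equals `L`. -/
def sphFracLapAt (d : ℕ) (α : ℝ) (φ : Ed d → ℝ) (η : Ed d) (L : ℝ) : Prop :=
  Filter.Tendsto
    (fun ε : ℝ => fracConst d α *
      ∫ θ in {θ : Ed d | θ ∈ unitSphere d ∧ ⟪θ, η⟫ ≤ Real.cos ε},
        (φ θ - φ η) * uKernel d α 0 ⟪θ, η⟫ ∂(sphMeasure d))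
    (nhdsWithin 0 (Set.Ioi 0)) (nhds L)

/-- The integrand of the radial operator `R_λ`. -/
noncomputable def RopIntegrand (d : ℕ) (α lam : ℝ) (φ : Ed d → ℝ) (η θ : Ed d) : ℝ :=
  φ θ * (uKernel d α lam ⟪θ, η⟫ - uKernel d α 0 ⟪θ, η⟫)

/-- The radial operator `R_λ φ (η)`. -/
noncomputable def Rop (d : ℕ) (α lam : ℝ) (φ : Ed d → ℝ) (η : Ed d) : ℝ :=
  fracConst d α * ∫ θ in unitSphere d, RopIntegrand d α lam φ η θ ∂(sphMeasure d)

/-- The modulus `ω`. -/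
noncomputable def omegaFn (α Θ : ℝ) : ℝ :=
  if α < 1 then Θ ^ α else if α = 1 then Θ * |Real.log Θ| else Θ

/-- The Euler beta function. -/
noncomputable def eulerBeta (a b : ℝ) : ℝ := Real.Gamma a * Real.Gamma b / Real.Gamma (a + b)

/-- The constant `B_{d,α}`. -/
noncomputable def Bconst (d : ℕ) (α : ℝ) : ℝ :=
  Real.Gamma (((d : ℝ) + α) / 2) / (π ^ ((3 : ℝ) / 2) * Real.Gamma (((d : ℝ) - 1 + α) / 2)) *
    Real.sin (π * α / 2) * eulerBeta (1 + α / 2) (((d : ℝ) - 1) / 2)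

/-- The constant `C_{d-1,α}`. -/
noncomputable def Cexit (d : ℕ) (α : ℝ) : ℝ :=
  Real.Gamma (((d : ℝ) - 1) / 2) /
    (2 ^ α * Real.Gamma (((d : ℝ) - 1 + α) / 2) * Real.Gamma (1 + α / 2))

/-- The constant `C̃_{d,α}`. -/
noncomputable def Ctilde (d : ℕ) (α : ℝ) : ℝ :=
  π ^ (((d : ℝ) - 1) / 2) / Real.Gamma (((d : ℝ) - 1) / 2) * Cexit d α *
    eulerBeta (1 + α / 2) (((d : ℝ) - 1) / 2)

/-- The norm `|ỹ|` of the first `d-1` coordinates of `y`. -/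
noncomputable def tnorm (d : ℕ) (y : Ed d) : ℝ :=
  Real.sqrt (∑ i : Fin d, if (i : ℕ) < d - 1 then (y i) ^ 2 else 0)

/-- The function `s_ε`. -/
noncomputable def sExit (d : ℕ) (α ε : ℝ) (y : Ed d) : ℝ :=
  Cexit d α * (max (ε ^ 2 - tnorm d y ^ 2) 0) ^ (α / 2)

/-- The cylinder `Π_ε`. -/
def cylPi (d : ℕ) (ε : ℝ) : Set (Ed d) := {y | tnorm d y < ε}

/-- The hyperplane `F = {y : y_d = 1}`. -/
def hyperF (d : ℕ) : Set (Ed d) := {y | lastCoord d y = 1}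

/-- The Riesz kernel `h(y) = |y|^{α-d}`. -/
noncomputable def rieszH (d : ℕ) (α : ℝ) (y : Ed d) : ℝ := ‖y‖ ^ (α - (d : ℝ))

/-- The inversion `T x = x/|x|²`. -/
noncomputable def inversion (d : ℕ) (x : Ed d) : Ed d := (‖x‖ ^ 2)⁻¹ • x

/-- The shifted cone `V_Θ = Γ_Θ + e_d/2`. -/
def Vcone (d : ℕ) (Θ : ℝ) : Set (Ed d) := {y | y - (1 / 2 : ℝ) • eLast d ∈ cone d Θ}

/-- The spindle `L_ε = T(V_Θ)` with `ε = tan(Θ/2)`, i.e. `Θ = 2 arctan ε`. -/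
def Lspindle (d : ℕ) (ε : ℝ) : Set (Ed d) := inversion d '' Vcone d (2 * Real.arctan ε)

/-- The curvilinear projection `y* = T(e_d/2 + (Ty - e_d/2)/(2|Ty - e_d/2|))`. -/
noncomputable def ystar (d : ℕ) (y : Ed d) : Ed d :=
  inversion d ((1 / 2 : ℝ) • eLast d +
    (2 * ‖inversion d y - (1 / 2 : ℝ) • eLast d‖)⁻¹ • (inversion d y - (1 / 2 : ℝ) • eLast d))

open scoped Classical in
/-- The function `s*_ε`. -/
noncomputable def sStar (d : ℕ) (α ε : ℝ) (y : Ed d) : ℝ :=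
  if y ∈ Lspindle d ε then Cexit d α * (max (ε ^ 2 - tnorm d (ystar d y) ^ 2) 0) ^ (α / 2)
  else 0

open scoped Classical in
/-- The function `u = K(h s*_ε)`, i.e. `u(y) = s*_ε(Ty)`, `u(0) = 0`. -/
noncomputable def uFn (d : ℕ) (α ε : ℝ) (y : Ed d) : ℝ :=
  if y = 0 then 0 else sStar d α ε (inversion d y)

/-- The spherical profile `φ_Θ`. -/
noncomputable def profileFn (d : ℕ) (α Θ : ℝ) (θ : Ed d) : ℝ :=
  2 ^ α * Cexit d α *
    (max (Real.tan (Θ / 2) ^ 2 - ‖eLast d - θ‖ ^ 2 / ‖eLast d + θ‖ ^ 2) 0) ^ (α / 2)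

/-- Laplacian on ℝ^d as the sum of pure second partial derivatives. -/
noncomputable def lapE (d : ℕ) (u : Ed d → ℝ) (x : Ed d) : ℝ :=
  ∑ i : Fin d,
    iteratedFDeriv ℝ 2 u x ![EuclideanSpace.single i (1 : ℝ), EuclideanSpace.single i (1 : ℝ)]

/-- Laplacian on ℝ^d × ℝ as the sum of the d+1 pure second partial derivatives. -/
noncomputable def lapProd (d : ℕ) (U : Ed d × ℝ → ℝ) (p : Ed d × ℝ) : ℝ :=
  (∑ i : Fin d, iteratedFDeriv ℝ 2 U p
      ![(EuclideanSpace.single i (1 : ℝ), (0 : ℝ)), (EuclideanSpace.single i (1 : ℝ), (0 : ℝ))]) +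
    iteratedFDeriv ℝ 2 U p ![((0 : Ed d), (1 : ℝ)), ((0 : Ed d), (1 : ℝ))]

/-- The Poisson kernel `P_t(x)` for the upper half-space. -/
noncomputable def poissonK (d : ℕ) (t : ℝ) (x : Ed d) : ℝ :=
  Real.Gamma (((d : ℝ) + 1) / 2) / π ^ (((d : ℝ) + 1) / 2) * t *
    (‖x‖ ^ 2 + t ^ 2) ^ (-((d : ℝ) + 1) / 2)

end
/-!
Along each line through `x ∈ Π_ε` the function `s_ε` is a truncated quadratic polynomial to the
power `α / 2`. The integral of the second difference of such a function against `t ^ (-1 - α)`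
depends only on the leading coefficient, so that `Δ^{α/2} s_ε(x)` is a constant times the integral
of `|θ̃| ^ α` over the unit sphere. A Gaussian computation of that integral gives
`Δ^{α/2} s_ε = -1` on `Π_ε`.

For the product one writes
`(h s_ε)(x + z) - (h s_ε)(x) = h(x) (s_ε(x + z) - s_ε(x)) + (h(x + z) - h(x)) s_ε(x + z)`.
The first term yields `-h(x)`. In the second one the linear part of `h` splits into a vertical term,
odd under `z_d ↦ -z_d`, and a horizontal term, which is odd under `z ↦ -z` once `s_ε(x + z)` is
replaced by `s_ε(x)`. Both integrate to zero, and what remains is `O(ε ^ α)` by Taylor's formula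
for `h` and the Hölder regularity of `s_ε`.
-/

open scoped Topology

/-! ### Second differences of a truncated quadratic -/

section TruncatedQuadratic

variable {a c β D : ℝ}

theorem integral_rpow_mul_one_sub_rpow (ha : 0 < a) (ha1 : a < 1) :
    ∫ x in Ioo (0 : ℝ) 1, x ^ (a - 1) * (1 - x) ^ (-a) = Gamma a * Gamma (1 - a) := by
  have hbeta : Complex.betaIntegral (a : ℂ) ((1 - a : ℝ) : ℂ) =
      ((∫ x in Ioo (0 : ℝ) 1, x ^ (a - 1) * (1 - x) ^ (-a) : ℝ) : ℂ) := by
    rw [Complex.betaIntegral, intervalIntegral.integral_of_le zero_le_one,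
      integral_Ioc_eq_integral_Ioo, ← integral_complex_ofReal]
    refine setIntegral_congr_fun measurableSet_Ioo fun x hx => ?_
    rw [Complex.ofReal_mul, Complex.ofReal_cpow hx.1.le, Complex.ofReal_cpow (by linarith [hx.2])]
    push_cast
    ring_nf
  have h := ProbabilityTheory.beta_eq_betaIntegralReal a (1 - a) ha (by linarith)
  rw [hbeta, Complex.ofReal_re] at h
  simp [← h, ProbabilityTheory.beta]

theorem image_mul_div_one_sub_Ioo (hc : 0 < c) :
    (fun x : ℝ => c * x / (1 - x)) '' Ioo 0 1 = Ioi 0 := by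
  ext k
  constructor
  · rintro ⟨x, ⟨hx0, hx1⟩, rfl⟩
    exact div_pos (mul_pos hc hx0) (sub_pos.2 hx1)
  · intro hk
    have hk' : 0 < k := hk
    refine ⟨k / (k + c), ⟨by positivity, by rw [div_lt_one (by positivity)]; linarith⟩, ?_⟩
    have hsub : 1 - k / (k + c) = c / (k + c) := by field_simp; ring
    simp only [hsub]
    field_simp

theorem integral_Ioi_rpow_mul_div_add (ha : 0 < a) (ha1 : a < 1) (hc : 0 < c) :
    ∫ k in Ioi (0 : ℝ), k ^ (a - 1) * (c / (k + c)) = c ^ a * (Gamma a * Gamma (1 - a)) := by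
  have hderiv : ∀ x ∈ Ioo (0 : ℝ) 1,
      HasDerivWithinAt (fun x : ℝ => c * x / (1 - x)) (c / (1 - x) ^ 2) (Ioo 0 1) x := by
    intro x hx
    have hne : 1 - x ≠ 0 := by linarith [hx.2]
    have h := ((hasDerivAt_id x).const_mul c).div ((hasDerivAt_id x).const_sub 1) hne
    refine (h.congr_deriv ?_).hasDerivWithinAt
    simp only [id]
    field_simp
    ring
  have hmono : MonotoneOn (fun x : ℝ => c * x / (1 - x)) (Ioo 0 1) := by
    intro x _ y hy hxy
    have := sub_pos.2 hy.2
    have := hy.1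
    simp only
    gcongr
  rw [← image_mul_div_one_sub_Ioo hc,
    integral_image_eq_integral_deriv_smul_of_monotoneOn measurableSet_Ioo hderiv hmono,
    ← integral_rpow_mul_one_sub_rpow ha ha1, ← integral_const_mul]
  refine setIntegral_congr_fun measurableSet_Ioo fun x ⟨hx0, hx1⟩ => ?_
  replace hx1 : 0 < 1 - x := sub_pos.2 hx1
  have hadd : c * x / (1 - x) + c = c / (1 - x) := by field_simp; ring
  simp only [smul_eq_mul]
  rw [hadd, div_rpow (by positivity) hx1.le, mul_rpow hc.le hx0.le, rpow_sub_one hc.ne',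
    rpow_sub_one hx1.ne', rpow_neg hx1.le]
  have := rpow_pos_of_pos hx1 a
  field_simp

theorem integrableOn_Ioi_rpow_mul_div_add (ha : 0 < a) (ha1 : a < 1) (hc : 0 < c) :
    IntegrableOn (fun k : ℝ => k ^ (a - 1) * (c / (k + c))) (Ioi 0) := by
  refine not_imp_comm.1 integral_undef ?_
  rw [integral_Ioi_rpow_mul_div_add ha ha1 hc]
  have := Gamma_pos_of_pos ha
  have := Gamma_pos_of_pos (sub_pos.2 ha1)
  positivity

theorem tendsto_rpow_mul_comp_inv {b : ℝ} (hb : b < 1) {ρ : ℝ → ℝ} (hρ : DifferentiableAt ℝ ρ 0)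
    (h0 : ρ 0 = 0) : Tendsto (fun M : ℝ => M ^ b * ρ M⁻¹) atTop (𝓝 0) := by
  have hρO : ρ =O[𝓝 0] (fun h : ℝ => h) := by simpa [h0] using hρ.hasDerivAt.isBigO_sub
  have hO : (fun M : ℝ => M ^ b * ρ M⁻¹) =O[atTop] (fun M : ℝ => M ^ b * M⁻¹) :=
    (Asymptotics.isBigO_refl _ _).mul (hρO.comp_tendsto tendsto_inv_atTop_zero)
  refine hO.trans_tendsto ((tendsto_rpow_neg_atTop (y := 1 - b) (by linarith)).congr' ?_)
  filter_upwards [eventually_gt_atTop 0] with M hM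
  rw [← rpow_neg_one, ← rpow_add hM]
  ring_nf

theorem tendsto_intervalIntegral_add_const_atTop {E : Type*} [NormedAddCommGroup E]
    [NormedSpace ℝ E] {r : ℝ → E} (hr : Tendsto r atTop (𝓝 0)) (b : ℝ) :
    Tendsto (fun N => ∫ w in N..N + b, r w) atTop (𝓝 0) := by
  rw [Metric.tendsto_nhds]
  intro δ hδ
  have hb : 0 < |b| + 1 := by positivity
  obtain ⟨M, hM⟩ := eventually_atTop.1 (Metric.tendsto_nhds.1 hr _ (div_pos hδ hb))
  filter_upwards [eventually_ge_atTop (M + |b|)] with N hN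
  have hle : ∀ w ∈ uIoc N (N + b), ‖r w‖ ≤ δ / (|b| + 1) := by
    intro w hw
    have hdist := abs_sub_left_of_mem_uIcc (uIoc_subset_uIcc hw)
    rw [add_sub_cancel_left] at hdist
    simpa using (hM w (by linarith [(abs_le.1 hdist).1])).le
  rw [dist_zero_right]
  calc ‖∫ w in N..N + b, r w‖ ≤ δ / (|b| + 1) * |N + b - N| :=
        intervalIntegral.norm_integral_le_of_norm_le_const hle
    _ < δ := by
        rw [add_sub_cancel_left, div_mul_eq_mul_div, div_lt_iff₀ hb]
        linarith

theorem continuous_max_zero_rpow_div {X : Type*} [TopologicalSpace X] {g h : X → ℝ}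
    (ha : 0 < a) (hg : Continuous g) (hh : Continuous h) (hgh : ∀ x, h x = 0 → g x < 0) :
    Continuous fun x => max (g x) 0 ^ a / h x := by
  have hnum : Continuous fun x => max (g x) 0 ^ a :=
    (hg.max continuous_const).rpow_const fun _ => Or.inr ha.le
  refine continuous_iff_continuousAt.2 fun x => ?_
  by_cases hx : h x = 0
  · refine (continuousAt_const (y := (0 : ℝ))).congr ?_
    filter_upwards [hg.continuousAt.eventually_lt_const (hgh x hx)] with y hy
    rw [max_eq_right hy.le, zero_rpow ha.ne', zero_div]
  · exact hnum.continuousAt.div hh.continuousAt hx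

theorem integral_rpow_div_add {M : ℝ} (ha : 0 < a) (hc : 0 < c) (hM : 0 ≤ M) :
    ∫ k in (0 : ℝ)..M, k ^ a / (k + c) =
      M ^ a / a - ∫ k in (0 : ℝ)..M, k ^ (a - 1) * (c / (k + c)) := by
  have hpow : IntervalIntegrable (fun k : ℝ => k ^ (a - 1)) volume 0 M :=
    intervalIntegral.intervalIntegrable_rpow' (by linarith)
  have hmul : IntervalIntegrable (fun k : ℝ => k ^ (a - 1) * (c / (k + c))) volume 0 M := by
    refine hpow.mul_continuousOn (ContinuousOn.div (by fun_prop) (by fun_prop) fun k hk => ?_)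
    rw [uIcc_of_le hM] at hk
    linarith [hk.1]
  have hprim : M ^ a / a = ∫ k in (0 : ℝ)..M, k ^ (a - 1) := by
    rw [integral_rpow (Or.inl (by linarith))]
    simp [ha.ne']
  rw [hprim, ← intervalIntegral.integral_sub hpow hmul]
  refine intervalIntegral.integral_congr_ae (Eventually.of_forall fun k hk => ?_)
  rw [uIoc_of_le hM] at hk
  have hk0 : 0 < k := hk.1
  rw [rpow_sub_one hk0.ne']
  field_simp
  ring

theorem integral_max_zero_rpow_div_add {M : ℝ} (ha : 0 < a) (hc : 0 < c) (hD : 0 ≤ D)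
    (hM : 0 ≤ M) :
    ∫ k in (-D)..M, max k 0 ^ a / (k + c) =
      M ^ a / a - ∫ k in (0 : ℝ)..M, k ^ (a - 1) * (c / (k + c)) := by
  have hcont : Continuous fun k : ℝ => max k 0 ^ a / (k + c) :=
    continuous_max_zero_rpow_div ha continuous_id (by fun_prop) fun k hk => by linarith
  have hneg : ∫ k in (-D)..0, max k 0 ^ a / (k + c) = 0 := by
    refine intervalIntegral.integral_zero_ae (Eventually.of_forall fun k hk => ?_)
    rw [uIoc_of_le (by linarith)] at hk
    rw [max_eq_right hk.2, zero_rpow ha.ne', zero_div]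
  rw [← integral_rpow_div_add ha hc hM, ← intervalIntegral.integral_add_adjacent_intervals
    (hcont.intervalIntegrable _ 0) (hcont.intervalIntegrable 0 _), hneg, zero_add]
  refine intervalIntegral.integral_congr fun k hk => ?_
  rw [uIcc_of_le hM] at hk
  simp only [max_eq_left hk.1]

theorem continuous_max_sq_sub_rpow_div_add (ha : 0 < a) (hβ : β ^ 2 < D) :
    Continuous fun w : ℝ => max (w ^ 2 - D) 0 ^ a / (w + β) :=
  continuous_max_zero_rpow_div ha (by fun_prop) (by fun_prop) fun w hw => by
    rw [eq_neg_of_add_eq_zero_left hw, neg_sq]; linarith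

theorem integral_max_sq_sub_rpow_div_add_add_div_sub {N : ℝ} (ha : 0 < a) (hβ : β ^ 2 < D)
    (hN : D ≤ N ^ 2) :
    ∫ w in (0 : ℝ)..N, (max (w ^ 2 - D) 0 ^ a / (w + β) + max (w ^ 2 - D) 0 ^ a / (w + -β)) =
      (N ^ 2 - D) ^ a / a -
        ∫ k in (0 : ℝ)..(N ^ 2 - D), k ^ (a - 1) * ((D - β ^ 2) / (k + (D - β ^ 2))) := by
  -- Substitute `k = w² - D`, using `1 / (w + β) + 1 / (w - β) = 2 w / (w² - β²)`.
  have hc : 0 < D - β ^ 2 := sub_pos.2 hβ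
  have hcont : Continuous fun k : ℝ => max k 0 ^ a / (k + (D - β ^ 2)) :=
    continuous_max_zero_rpow_div ha continuous_id (by fun_prop) fun k hk => by linarith
  rw [← integral_max_zero_rpow_div_add ha hc ((sq_nonneg β).trans hβ.le) (sub_nonneg.2 hN)]
  have hsubst := intervalIntegral.integral_comp_mul_deriv (a := 0) (b := N)
    (f := fun w : ℝ => w ^ 2 - D) (f' := fun w => 2 * w)
    (fun w _ => by simpa using (hasDerivAt_pow 2 w).sub_const D) (by fun_prop) hcont
  simp only [Function.comp_def] at hsubst
  rw [show (0 : ℝ) ^ 2 - D = -D by ring] at hsubst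
  rw [← hsubst]
  refine intervalIntegral.integral_congr fun w _ => ?_
  rcases le_or_gt (w ^ 2) D with hw | hw
  · simp [max_eq_right (sub_nonpos.2 hw), zero_rpow ha.ne']
  · have hfactor : w ^ 2 - D + (D - β ^ 2) = (w + β) * (w + -β) := by ring
    have hne : (w + β) * (w + -β) ≠ 0 := by rw [← hfactor]; linarith
    rw [hfactor]
    field_simp [left_ne_zero_of_mul hne, right_ne_zero_of_mul hne]
    ring

theorem tendsto_rpow_sub_sub_rpow_atTop (ha1 : a < 1) (D : ℝ) :
    Tendsto (fun M : ℝ => M ^ a - (M - D) ^ a) atTop (𝓝 0) := by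
  have hρ : DifferentiableAt ℝ (fun h : ℝ => 1 - (1 - D * h) ^ a) 0 :=
    DifferentiableAt.sub (by fun_prop)
      (DifferentiableAt.rpow_const (by fun_prop) (Or.inl (by simp)))
  refine (tendsto_rpow_mul_comp_inv ha1 hρ (by simp)).congr' ?_
  filter_upwards [eventually_gt_atTop 0, eventually_ge_atTop D] with M hM hMD
  rw [show 1 - D * M⁻¹ = (M - D) / M by field_simp, div_rpow (sub_nonneg.2 hMD) hM.le]
  have := rpow_pos_of_pos hM a
  field_simp

theorem tendsto_max_sq_sub_rpow_div_sub_atTop (ha1 : a < 1) (β D : ℝ) :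
    Tendsto (fun w : ℝ => max ((w + β) ^ 2 - D) 0 ^ a / w - max (w ^ 2 - D) 0 ^ a / (w + β))
      atTop (𝓝 0) := by
  have hρ : DifferentiableAt ℝ
      (fun h : ℝ => ((1 + β * h) ^ 2 - D * h ^ 2) ^ a - (1 - D * h ^ 2) ^ a / (1 + β * h)) 0 :=
    (DifferentiableAt.rpow_const (by fun_prop) (Or.inl (by simp))).sub
      ((DifferentiableAt.rpow_const (by fun_prop) (Or.inl (by simp))).div (by fun_prop) (by simp))
  refine (tendsto_rpow_mul_comp_inv (b := 2 * a - 1) (by linarith) hρ (by simp)).congr' ?_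
  have hsq : Tendsto (fun w : ℝ => w ^ 2) atTop atTop := tendsto_pow_atTop two_ne_zero
  filter_upwards [eventually_gt_atTop 0, eventually_gt_atTop (-β), hsq.eventually_ge_atTop D,
    (hsq.comp (tendsto_atTop_add_const_right _ β tendsto_id)).eventually_ge_atTop D]
    with w hw hwβ hD hDβ
  have hDβ' : D ≤ (w + β) ^ 2 := hDβ
  have hne : w + β ≠ 0 := by linarith
  rw [max_eq_left (sub_nonneg.2 hD), max_eq_left (sub_nonneg.2 hDβ'),
    show (1 + β * w⁻¹) ^ 2 - D * w⁻¹ ^ 2 = ((w + β) ^ 2 - D) / w ^ 2 by field_simp,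
    show 1 - D * w⁻¹ ^ 2 = (w ^ 2 - D) / w ^ 2 by field_simp,
    show 1 + β * w⁻¹ = (w + β) / w by field_simp, div_rpow (sub_nonneg.2 hDβ') (by positivity),
    div_rpow (sub_nonneg.2 hD) (by positivity), ← rpow_natCast_mul hw.le, rpow_sub_one hw.ne']
  have := rpow_pos_of_pos hw (2 * a)
  push_cast
  field_simp

theorem integral_max_sub_sq_sub_rpow_div (ha : 0 < a) (hβ : β ^ 2 < D) (N : ℝ) :
    ∫ u in (0 : ℝ)..N, max ((u - β) ^ 2 - D) 0 ^ a / u =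
      ∫ w in (0 : ℝ)..(N - β), max (w ^ 2 - D) 0 ^ a / (w + β) := by
  have hcont := continuous_max_sq_sub_rpow_div_add ha hβ
  have hshift := intervalIntegral.integral_comp_sub_right (a := 0) (b := N)
    (fun w : ℝ => max (w ^ 2 - D) 0 ^ a / (w + β)) β
  simp only [sub_add_cancel, zero_sub] at hshift
  have hzero : ∫ w in (-β)..0, max (w ^ 2 - D) 0 ^ a / (w + β) = 0 := by
    refine intervalIntegral.integral_zero_ae (Eventually.of_forall fun w hw => ?_)
    have hwβ : w ^ 2 ≤ β ^ 2 := by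
      have := abs_sub_right_of_mem_uIcc (uIoc_subset_uIcc hw)
      rw [sq_le_sq]
      simpa using this
    rw [max_eq_right (by linarith), zero_rpow ha.ne', zero_div]
  rw [hshift, ← intervalIntegral.integral_add_adjacent_intervals
    (hcont.intervalIntegrable _ 0) (hcont.intervalIntegrable 0 _), hzero, zero_add]

theorem integral_max_sub_sq_add_max_add_sq (ha : 0 < a) (hβ : β ^ 2 < D) (N : ℝ) :
    (∫ u in (0 : ℝ)..N, max ((u - β) ^ 2 - D) 0 ^ a / u) +
        ∫ u in (0 : ℝ)..N, max ((u + β) ^ 2 - D) 0 ^ a / u =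
      (∫ w in (0 : ℝ)..N, (max (w ^ 2 - D) 0 ^ a / (w + β) + max (w ^ 2 - D) 0 ^ a / (w + -β))) +
        ∫ w in (N - β)..(N - β + β),
          (max ((w + β) ^ 2 - D) 0 ^ a / w - max (w ^ 2 - D) 0 ^ a / (w + β)) := by
  -- Moving both integrals to the variable `w = u ∓ β` leaves an error on a window of length `β`.
  have hplus := integral_max_sub_sq_sub_rpow_div ha hβ N
  have hminus := integral_max_sub_sq_sub_rpow_div (β := -β) ha (by rwa [neg_sq]) N
  simp only [sub_neg_eq_add] at hminus
  have hcont : ∀ x y, IntervalIntegrable (fun w : ℝ => max (w ^ 2 - D) 0 ^ a / (w + β))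
      volume x y := fun x y => (continuous_max_sq_sub_rpow_div_add ha hβ).intervalIntegrable x y
  have hcont_neg : Continuous fun w : ℝ => max (w ^ 2 - D) 0 ^ a / (w + -β) :=
    continuous_max_sq_sub_rpow_div_add ha (by rwa [neg_sq])
  have hcont' : ∀ x y, IntervalIntegrable (fun w : ℝ => max (w ^ 2 - D) 0 ^ a / (w + -β))
      volume x y := hcont_neg.intervalIntegrable
  have hcont_shift : Continuous fun w : ℝ => max ((w + β) ^ 2 - D) 0 ^ a / w := by
    simpa [Function.comp_def] using hcont_neg.comp (continuous_add_const β)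
  have hshift : ∫ w in (N - β)..N, max ((w + β) ^ 2 - D) 0 ^ a / w =
      ∫ w in N..(N + β), max (w ^ 2 - D) 0 ^ a / (w + -β) := by
    simpa using intervalIntegral.integral_comp_add_right (a := N - β) (b := N)
      (fun w : ℝ => max (w ^ 2 - D) 0 ^ a / (w + -β)) β
  rw [hplus, hminus, sub_add_cancel, intervalIntegral.integral_add (hcont _ _) (hcont' _ _),
    intervalIntegral.integral_sub (hcont_shift.intervalIntegrable _ _) (hcont _ _), hshift,
    ← intervalIntegral.integral_add_adjacent_intervals (hcont 0 (N - β)) (hcont _ N),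
    ← intervalIntegral.integral_add_adjacent_intervals (hcont' 0 N) (hcont' _ (N + β))]
  ring

theorem integral_secondDiff_max_sq_sub_rpow_div (ha : 0 < a) (hβ : β ^ 2 < D) {N : ℝ}
    (hN0 : 0 ≤ N) (hN : D ≤ N ^ 2) :
    ∫ u in (0 : ℝ)..N, (2 * u ^ (2 * a) - max ((u - β) ^ 2 - D) 0 ^ a -
        max ((u + β) ^ 2 - D) 0 ^ a) / u =
      ((N ^ 2) ^ a - (N ^ 2 - D) ^ a) / a +
        (∫ k in (0 : ℝ)..(N ^ 2 - D), k ^ (a - 1) * ((D - β ^ 2) / (k + (D - β ^ 2)))) -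
        ∫ w in (N - β)..(N - β + β),
          (max ((w + β) ^ 2 - D) 0 ^ a / w - max (w ^ 2 - D) 0 ^ a / (w + β)) := by
  have hpow : IntervalIntegrable (fun u : ℝ => 2 * u ^ (2 * a - 1)) volume 0 N :=
    (intervalIntegral.intervalIntegrable_rpow' (by linarith)).const_mul 2
  have hshift : ∀ b : ℝ, b ^ 2 < D →
      IntervalIntegrable (fun u : ℝ => max ((u + b) ^ 2 - D) 0 ^ a / u) volume 0 N := by
    intro b hb
    refine (continuous_max_zero_rpow_div ha (by fun_prop) continuous_id fun u hu => ?_)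
      |>.intervalIntegrable 0 N
    rw [show u = 0 from hu, zero_add]
    linarith
  have hminus := hshift (-β) (by rwa [neg_sq])
  simp only [← sub_eq_add_neg] at hminus
  have hsplit : ∫ u in (0 : ℝ)..N, (2 * u ^ (2 * a) - max ((u - β) ^ 2 - D) 0 ^ a -
        max ((u + β) ^ 2 - D) 0 ^ a) / u =
      ∫ u in (0 : ℝ)..N, (2 * u ^ (2 * a - 1) - (max ((u - β) ^ 2 - D) 0 ^ a / u +
        max ((u + β) ^ 2 - D) 0 ^ a / u)) := by
    refine intervalIntegral.integral_congr_ae (Eventually.of_forall fun u hu => ?_)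
    rw [uIoc_of_le hN0] at hu
    rw [rpow_sub_one hu.1.ne']
    ring
  have hprim : ∫ u in (0 : ℝ)..N, 2 * u ^ (2 * a - 1) = (N ^ 2) ^ a / a := by
    rw [intervalIntegral.integral_const_mul, integral_rpow (Or.inl (by linarith)),
      sub_add_cancel, zero_rpow (by positivity), rpow_mul hN0, rpow_two]
    field_simp
    ring
  rw [hsplit, intervalIntegral.integral_sub hpow (hminus.add (hshift β hβ)),
    intervalIntegral.integral_add hminus (hshift β hβ),
    integral_max_sub_sq_add_max_add_sq ha hβ, integral_max_sq_sub_rpow_div_add_add_div_sub ha hβ hN,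
    hprim]
  ring

theorem tendsto_integral_secondDiff_max_sq_sub_rpow_div (ha : 0 < a) (ha1 : a < 1)
    (hβ : β ^ 2 < D) :
    Tendsto (fun N => ∫ u in (0 : ℝ)..N, (2 * u ^ (2 * a) - max ((u - β) ^ 2 - D) 0 ^ a -
        max ((u + β) ^ 2 - D) 0 ^ a) / u) atTop
      (𝓝 ((D - β ^ 2) ^ a * (Gamma a * Gamma (1 - a)))) := by
  have hsq : Tendsto (fun N : ℝ => N ^ 2) atTop atTop := tendsto_pow_atTop two_ne_zero
  have hc : 0 < D - β ^ 2 := sub_pos.2 hβ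
  have hpow := ((tendsto_rpow_sub_sub_rpow_atTop ha1 D).comp hsq).div_const a
  have hmain := intervalIntegral_tendsto_integral_Ioi 0
    (integrableOn_Ioi_rpow_mul_div_add ha ha1 hc) (tendsto_atTop_add_const_right _ (-D) hsq)
  have hedge := (tendsto_intervalIntegral_add_const_atTop
    (tendsto_max_sq_sub_rpow_div_sub_atTop ha1 β D) β).comp
      (tendsto_atTop_add_const_right _ (-β) tendsto_id)
  rw [integral_Ioi_rpow_mul_div_add ha ha1 hc] at hmain
  have hlim := (hpow.add hmain).sub hedge
  rw [zero_div, zero_add, sub_zero] at hlim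
  refine hlim.congr' ?_
  filter_upwards [eventually_ge_atTop 0, hsq.eventually_ge_atTop D] with N hN0 hN
  rw [integral_secondDiff_max_sq_sub_rpow_div ha hβ hN0 hN]
  simp only [Function.comp_apply, id, sub_eq_add_neg]

theorem image_const_div_Ioi {P : ℝ} (hP : 0 < P) : (fun u : ℝ => P / u) '' Ioi 0 = Ioi 0 := by
  ext t
  constructor
  · rintro ⟨u, hu, rfl⟩
    exact div_pos hP hu
  · exact fun ht => ⟨P / t, div_pos hP ht, div_div_cancel₀ hP.ne'⟩

theorem hasDerivWithinAt_const_div (P : ℝ) :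
    ∀ u ∈ Ioi (0 : ℝ), HasDerivWithinAt (fun u : ℝ => P / u) (-(P / u ^ 2)) (Ioi 0) u := by
  intro u hu
  refine (((hasDerivAt_inv (ne_of_gt hu)).const_mul P).congr_deriv ?_).hasDerivWithinAt
  ring

theorem antitoneOn_const_div_Ioi {P : ℝ} (hP : 0 < P) :
    AntitoneOn (fun u : ℝ => P / u) (Ioi 0) := fun u hu v _ huv => by
  have : 0 < u := hu
  simp only
  gcongr

theorem max_quadratic_const_div_rpow_mul {P u : ℝ} (hP : 0 < P) (hu : 0 < u) (β γ : ℝ) :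
    P / u ^ 2 * (max (P - 2 * β * (P / u) - γ * (P / u) ^ 2) 0 ^ a * (P / u) ^ (-1 - 2 * a)) =
      P ^ (-a) * (max ((u - β) ^ 2 - (β ^ 2 + P * γ)) 0 ^ a / u) := by
  have hmax : max (P - 2 * β * (P / u) - γ * (P / u) ^ 2) 0 =
      P / u ^ 2 * max ((u - β) ^ 2 - (β ^ 2 + P * γ)) 0 := by
    rw [mul_max_of_nonneg _ _ (by positivity), mul_zero]
    congr 1
    field_simp
    ring
  have : 0 < P ^ a := rpow_pos_of_pos hP a
  have : 0 < u ^ (2 * a) := rpow_pos_of_pos hu (2 * a)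
  rw [hmax, mul_rpow (by positivity) (le_max_right _ _), div_rpow hP.le (by positivity),
    ← rpow_natCast_mul hu.le, rpow_sub (by positivity), rpow_neg_one, rpow_neg hP.le,
    div_rpow hP.le hu.le, mul_comm 2 a, rpow_mul hP.le, rpow_two]
  push_cast
  rw [mul_comm a 2]
  field_simp

theorem secondDiff_quadratic_const_div {P u : ℝ} (hP : 0 < P) (hu : 0 < u) (β γ : ℝ) :
    P / u ^ 2 * ((2 * P ^ a - max (P - 2 * β * (P / u) - γ * (P / u) ^ 2) 0 ^ a -
      max (P + 2 * β * (P / u) - γ * (P / u) ^ 2) 0 ^ a) * (P / u) ^ (-1 - 2 * a)) =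
      P ^ (-a) * ((2 * u ^ (2 * a) - max ((u - β) ^ 2 - (β ^ 2 + P * γ)) 0 ^ a -
        max ((u + β) ^ 2 - (β ^ 2 + P * γ)) 0 ^ a) / u) := by
  have hconst := max_quadratic_const_div_rpow_mul (a := a) hP hu 0 0
  have hminus := max_quadratic_const_div_rpow_mul (a := a) hP hu β γ
  have hplus := max_quadratic_const_div_rpow_mul (a := a) hP hu (-β) γ
  have hsq : max ((u - 0) ^ 2 - (0 ^ 2 + P * 0)) 0 ^ a = u ^ (2 * a) := by
    rw [rpow_mul hu.le, rpow_two]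
    simp [max_eq_left (sq_nonneg u)]
  rw [hsq, show P - 2 * 0 * (P / u) - 0 * (P / u) ^ 2 = P by ring, max_eq_left hP.le] at hconst
  simp only [mul_neg, neg_mul, sub_neg_eq_add, neg_sq] at hplus
  linear_combination 2 * hconst - hminus - hplus

theorem integral_secondDiff_quadratic {P γ : ℝ} (ha : 0 < a) (ha1 : a < 1) (hP : 0 < P)
    (hγ : 0 < γ)
    (hint : IntegrableOn (fun t : ℝ => (2 * P ^ a - max (P - 2 * β * t - γ * t ^ 2) 0 ^ a -
      max (P + 2 * β * t - γ * t ^ 2) 0 ^ a) * t ^ (-1 - 2 * a)) (Ioi 0)) :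
    ∫ t in Ioi (0 : ℝ), (2 * P ^ a - max (P - 2 * β * t - γ * t ^ 2) 0 ^ a -
      max (P + 2 * β * t - γ * t ^ 2) 0 ^ a) * t ^ (-1 - 2 * a) =
      γ ^ a * (Gamma a * Gamma (1 - a)) := by
  -- With `t = P / u` the truncated quadratics become `(u ∓ β)² - (β² + P γ)`, and `P` cancels.
  have hderiv := hasDerivWithinAt_const_div P
  have hanti := antitoneOn_const_div_Ioi hP
  have hβ : β ^ 2 < β ^ 2 + P * γ := by have := mul_pos hP hγ; linarith
  have hcongr := fun u (hu : u ∈ Ioi (0 : ℝ)) =>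
    secondDiff_quadratic_const_div (a := a) hP hu β γ
  rw [← image_const_div_Ioi hP, integrableOn_image_iff_integrableOn_deriv_smul_of_antitoneOn
    measurableSet_Ioi hderiv hanti] at hint
  simp only [neg_neg, smul_eq_mul] at hint
  rw [integrableOn_congr_fun hcongr measurableSet_Ioi] at hint
  have hlim := intervalIntegral_tendsto_integral_Ioi 0 hint tendsto_id
  simp only [intervalIntegral.integral_const_mul, id] at hlim
  have hvalue := tendsto_nhds_unique hlim
    ((tendsto_integral_secondDiff_max_sq_sub_rpow_div ha ha1 hβ).const_mul (P ^ (-a)))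
  rw [← image_const_div_Ioi hP, integral_image_eq_integral_deriv_smul_of_antitoneOn
    measurableSet_Ioi hderiv hanti]
  simp only [neg_neg, smul_eq_mul]
  rw [setIntegral_congr_fun measurableSet_Ioi hcongr, hvalue, add_sub_cancel_left,
    mul_rpow hP.le hγ.le, rpow_neg hP.le]
  have := rpow_pos_of_pos hP a
  field_simp

end TruncatedQuadratic

/-! ### Polar coordinates -/

section Polar

variable {E F : Type*} [NormedAddCommGroup E] [NormedSpace ℝ E] [MeasurableSpace E] [BorelSpace E]
  [FiniteDimensional ℝ E] [NormedAddCommGroup F]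
  (μ : Measure E) [μ.IsAddHaarMeasure]

theorem integrable_polar {f : E → F} (hf : Integrable f μ) :
    Integrable (fun p : sphere (0 : E) 1 × Ioi (0 : ℝ) => f ((p.2 : ℝ) • (p.1 : E)))
      (μ.toSphere.prod (.volumeIoiPow (Module.finrank ℝ E - 1))) := by
  rw [← μ.measurePreserving_homeomorphUnitSphereProd.integrable_comp_emb
    (Homeomorph.measurableEmbedding _)]
  have h : Integrable (fun x : ({(0)}ᶜ : Set E) => f x) (μ.comap (↑)) :=
    (integrableOn_iff_comap_subtypeVal (measurableSet_singleton (0 : E)).compl).1 hf.integrableOn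
  refine h.congr (Eventually.of_forall fun x => ?_)
  have : ‖(x : E)‖ ≠ 0 := norm_ne_zero_iff.2 x.2
  simp [smul_smul, this]

variable [NormedSpace ℝ F]

theorem integral_volumeIoiPow (n : ℕ) (g : ℝ → F) :
    ∫ t : Ioi (0 : ℝ), g t ∂(Measure.volumeIoiPow n) = ∫ t in Ioi (0 : ℝ), t ^ n • g t := by
  simp only [Measure.volumeIoiPow, ENNReal.ofReal]
  rw [integral_withDensity_eq_integral_smul,
    integral_subtype_comap measurableSet_Ioi fun a ↦ Real.toNNReal (a ^ n) • g a,
    setIntegral_congr_fun measurableSet_Ioi fun x hx ↦ ?_]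
  · rw [NNReal.smul_def, Real.coe_toNNReal _ (pow_nonneg hx.out.le _)]
  · exact (measurable_subtype_coe.pow_const _).real_toNNReal

theorem integrableOn_Ioi_pow_smul_of_volumeIoiPow {n : ℕ} {g : ℝ → F}
    (hg : Integrable (fun t : Ioi (0 : ℝ) => g t) (Measure.volumeIoiPow n)) :
    IntegrableOn (fun t => t ^ n • g t) (Ioi (0 : ℝ)) := by
  rw [Measure.volumeIoiPow, integrable_withDensity_iff_integrable_smul' (by fun_prop) (by simp)]
    at hg
  rw [integrableOn_iff_comap_subtypeVal measurableSet_Ioi]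
  refine hg.congr (Eventually.of_forall ?_)
  rintro ⟨x, hx : 0 < x⟩
  simp (disch := positivity) [ENNReal.toReal_ofReal]

theorem integral_polar [Nontrivial E] {f : E → F} (hf : Integrable f μ) :
    ∫ x, f x ∂μ = ∫ θ, (∫ t in Ioi (0 : ℝ), t ^ (Module.finrank ℝ E - 1) • f (t • (θ : E)))
      ∂μ.toSphere := by
  calc
    ∫ x, f x ∂μ = ∫ x : ({(0)}ᶜ : Set E), f x ∂(μ.comap (↑)) := by
      rw [integral_subtype_comap (measurableSet_singleton _).compl fun x ↦ f x,
        restrict_compl_singleton]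
    _ = ∫ p : sphere (0 : E) 1 × Ioi (0 : ℝ), f ((p.2 : ℝ) • (p.1 : E))
        ∂μ.toSphere.prod (.volumeIoiPow (Module.finrank ℝ E - 1)) := by
      rw [← μ.measurePreserving_homeomorphUnitSphereProd.integral_comp
        (Homeomorph.measurableEmbedding _)]
      refine integral_congr_ae (Eventually.of_forall fun x => ?_)
      have : ‖(x : E)‖ ≠ 0 := norm_ne_zero_iff.2 x.2
      simp [smul_smul, this]
    _ = _ := by
      rw [integral_prod _ (integrable_polar μ hf)]
      exact integral_congr_ae (Eventually.of_forall fun θ =>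
        integral_volumeIoiPow _ fun t => f (t • (θ : E)))

theorem ae_integrableOn_ray {f : E → F} (hf : Integrable f μ) :
    ∀ᵐ θ : sphere (0 : E) 1 ∂μ.toSphere, IntegrableOn
      (fun t : ℝ => t ^ (Module.finrank ℝ E - 1) • f (t • (θ : E))) (Ioi 0) := by
  filter_upwards [(integrable_polar μ hf).prod_right_ae] with θ hθ
  exact integrableOn_Ioi_pow_smul_of_volumeIoiPow (g := fun t => f (t • (θ : E))) hθ

end Polar

/-! ### The splitting `y = (ỹ, y_d)` -/

section Coordinates

variable {d : ℕ}

/-- The projection `y ↦ (ỹ, 0)`, kept inside `ℝ^d` so that `|ỹ|` is the norm of a vector. -/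
def tproj (d : ℕ) : Ed d →ₗ[ℝ] Ed d where
  toFun y := WithLp.toLp 2 fun i => if (i : ℕ) < d - 1 then y i else 0
  map_add' u v := by
    ext i
    by_cases h : (i : ℕ) < d - 1 <;> simp [h]
  map_smul' c v := by
    ext i
    by_cases h : (i : ℕ) < d - 1 <;> simp [h]

theorem tproj_apply (y : Ed d) (i : Fin d) :
    tproj d y i = if (i : ℕ) < d - 1 then y i else 0 := rfl

theorem tnorm_eq_norm_tproj (y : Ed d) : tnorm d y = ‖tproj d y‖ := by
  rw [tnorm, EuclideanSpace.norm_eq]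
  congr 1
  refine Finset.sum_congr rfl fun i _ => ?_
  rw [tproj_apply]
  split_ifs <;> simp

theorem inner_tproj_tproj (u v : Ed d) : ⟪tproj d u, tproj d v⟫ = ⟪tproj d u, v⟫ := by
  simp only [PiLp.inner_apply]
  refine Finset.sum_congr rfl fun i _ => ?_
  rw [tproj_apply, tproj_apply]
  split_ifs <;> simp

theorem inner_eq_tproj_add (hd : 0 < d) (u v : Ed d) :
    ⟪u, v⟫ = ⟪tproj d u, v⟫ + lastCoord d u * lastCoord d v := by
  obtain ⟨n, rfl⟩ : ∃ n, d = n + 1 := ⟨d - 1, by omega⟩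
  simp only [PiLp.inner_apply, Fin.sum_univ_castSucc, tproj_apply, lastCoord, hd, dif_pos]
  simp [Fin.last, mul_comm]

theorem norm_sq_eq_tnorm_add (hd : 0 < d) (u : Ed d) :
    ‖u‖ ^ 2 = tnorm d u ^ 2 + lastCoord d u ^ 2 := by
  rw [tnorm_eq_norm_tproj, ← real_inner_self_eq_norm_sq, ← real_inner_self_eq_norm_sq,
    inner_eq_tproj_add hd, inner_tproj_tproj]
  ring

theorem tnorm_le_norm (u : Ed d) : tnorm d u ≤ ‖u‖ := by
  rw [tnorm, EuclideanSpace.norm_eq]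
  refine sqrt_le_sqrt (Finset.sum_le_sum fun i _ => ?_)
  split_ifs
  · simp
  · positivity

theorem tnorm_nonneg (u : Ed d) : 0 ≤ tnorm d u := sqrt_nonneg _

theorem continuous_tnorm : Continuous (tnorm d) := by
  have : tnorm d = fun y => ‖tproj d y‖ := funext tnorm_eq_norm_tproj
  rw [this]
  exact (LinearMap.continuous_of_finiteDimensional (tproj d)).norm

theorem tnorm_smul (t : ℝ) (u : Ed d) : tnorm d (t • u) = |t| * tnorm d u := by
  simp [tnorm_eq_norm_tproj, norm_smul]

theorem tnorm_add_sq (x z : Ed d) :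
    tnorm d (x + z) ^ 2 = tnorm d x ^ 2 + 2 * ⟪tproj d x, z⟫ + tnorm d z ^ 2 := by
  simp only [tnorm_eq_norm_tproj, map_add]
  rw [norm_add_sq_real, inner_tproj_tproj]

theorem abs_inner_tproj_le (x z : Ed d) : |⟪tproj d x, z⟫| ≤ tnorm d x * tnorm d z := by
  rw [← inner_tproj_tproj, tnorm_eq_norm_tproj, tnorm_eq_norm_tproj]
  exact abs_real_inner_le_norm _ _

theorem abs_inner_tproj_le_norm (x z : Ed d) : |⟪tproj d x, z⟫| ≤ tnorm d x * ‖z‖ := by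
  rw [tnorm_eq_norm_tproj]
  exact abs_real_inner_le_norm _ _

theorem abs_tnorm_sub_le (x y : Ed d) : |tnorm d y - tnorm d x| ≤ ‖y - x‖ := by
  refine le_trans ?_ (tnorm_le_norm (y - x))
  rw [tnorm_eq_norm_tproj, tnorm_eq_norm_tproj, tnorm_eq_norm_tproj, map_sub]
  exact abs_norm_sub_norm_le _ _

/-- The reflection `(ỹ, y_d) ↦ (ỹ, -y_d)`, a symmetry of `s_ε`. -/
noncomputable def reflLast (d : ℕ) : Ed d ≃ₗᵢ[ℝ] Ed d :=
  LinearIsometryEquiv.piLpCongrRight 2 fun i : Fin d =>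
    if (i : ℕ) < d - 1 then LinearIsometryEquiv.refl ℝ ℝ else LinearIsometryEquiv.neg ℝ

theorem reflLast_apply (y : Ed d) (i : Fin d) :
    reflLast d y i = if (i : ℕ) < d - 1 then y i else - y i := by
  simp only [reflLast, LinearIsometryEquiv.piLpCongrRight_apply]
  split_ifs <;> simp

theorem tproj_reflLast (y : Ed d) : tproj d (reflLast d y) = tproj d y := by
  ext i
  rw [tproj_apply, tproj_apply, reflLast_apply]
  split_ifs <;> rfl

theorem lastCoord_reflLast (y : Ed d) : lastCoord d (reflLast d y) = - lastCoord d y := by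
  unfold lastCoord
  split_ifs
  · rw [reflLast_apply, if_neg (by simp)]
  · simp

theorem abs_lastCoord_le (hd : 0 < d) (u : Ed d) : |lastCoord d u| ≤ ‖u‖ := by
  apply abs_le_of_sq_le_sq _ (norm_nonneg u)
  rw [norm_sq_eq_tnorm_add hd]
  nlinarith [sq_nonneg (tnorm d u)]

theorem continuous_lastCoord : Continuous (lastCoord d) := by
  unfold lastCoord
  split_ifs
  · fun_prop
  · exact continuous_const

end Coordinates

/-! ### The moment of `|ỹ|` on the unit sphere -/

section SphereMoment

variable {d : ℕ}

theorem integral_Ioi_pow_mul_rpow_mul_exp {n : ℕ} {α : ℝ} (hα : -1 < n + α) :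
    ∫ t in Ioi (0 : ℝ), t ^ n * (t ^ α * rexp (-t ^ 2)) = 1 / 2 * Gamma ((n + α + 1) / 2) := by
  rw [← integral_rpow_mul_exp_neg_rpow two_pos (q := n + α) hα]
  refine setIntegral_congr_fun measurableSet_Ioi fun t (ht : 0 < t) => ?_
  rw [rpow_add ht, rpow_natCast, rpow_two, mul_assoc]

theorem integrable_rpow_norm_mul_exp {α : ℝ} (hd : 0 < d) (hα : -(d : ℝ) < α) :
    Integrable fun y : Ed d => ‖y‖ ^ α * rexp (-‖y‖ ^ 2) := by
  have : Nonempty (Fin d) := ⟨⟨0, hd⟩⟩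
  rw [integrable_fun_norm_addHaar volume (f := fun t : ℝ => t ^ α * rexp (-t ^ 2))]
  have hray := integrableOn_rpow_mul_exp_neg_rpow (p := 2) (s := (d - 1 : ℕ) + α)
    (by rw [Nat.cast_pred hd]; linarith) two_pos
  refine hray.congr_fun (fun t (ht : 0 < t) => ?_) measurableSet_Ioi
  simp only [finrank_euclideanSpace, Fintype.card_fin, smul_eq_mul]
  rw [rpow_add ht, rpow_natCast, rpow_two, mul_assoc]

theorem integrable_rpow_tnorm_mul_exp {α : ℝ} (hd : 0 < d) (hα : 0 ≤ α) :
    Integrable fun y : Ed d => tnorm d y ^ α * rexp (-‖y‖ ^ 2) := by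
  have hd' : (0 : ℝ) < d := Nat.cast_pos.2 hd
  refine (integrable_rpow_norm_mul_exp hd (by linarith)).mono' ?_ (Eventually.of_forall fun y => ?_)
  · exact ((continuous_tnorm.rpow_const fun _ => Or.inr hα).mul
      (by fun_prop)).aestronglyMeasurable
  · have hnonneg := tnorm_nonneg y
    have hle := tnorm_le_norm y
    rw [norm_eq_abs, abs_of_nonneg (by positivity)]
    gcongr

theorem integral_rpow_tnorm_mul_exp_eq_sphere {α : ℝ} (hd : 0 < d) (hα : 0 ≤ α) :
    ∫ y : Ed d, tnorm d y ^ α * rexp (-‖y‖ ^ 2) =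
      (∫ θ : sphere (0 : Ed d) 1, tnorm d θ ^ α ∂(volume : Measure (Ed d)).toSphere) *
        (1 / 2 * Gamma ((d + α) / 2)) := by
  have : Nonempty (Fin d) := ⟨⟨0, hd⟩⟩
  have hd' : (0 : ℝ) < d := Nat.cast_pos.2 hd
  simp only [integral_polar volume (integrable_rpow_tnorm_mul_exp hd hα), smul_eq_mul]
  rw [← integral_mul_const]
  refine integral_congr_ae (Eventually.of_forall fun θ => ?_)
  have hθ : ‖(θ : Ed d)‖ = 1 := by simp
  have hexp : ((d : ℝ) + α) / 2 = ((d - 1 : ℕ) + α + 1) / 2 := by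
    rw [Nat.cast_pred hd]; ring
  simp only
  rw [hexp, ← integral_Ioi_pow_mul_rpow_mul_exp (by rw [Nat.cast_pred hd]; linarith),
    ← integral_const_mul]
  refine setIntegral_congr_fun measurableSet_Ioi fun t (ht : 0 < t) => ?_
  simp only [finrank_euclideanSpace, Fintype.card_fin]
  rw [tnorm_smul, norm_smul, hθ, norm_eq_abs, abs_of_pos ht, mul_rpow ht.le (tnorm_nonneg _),
    mul_one]
  ring

theorem integral_rpow_norm_mul_exp {n : ℕ} (hn : 0 < n) {α : ℝ} (hα : -(n : ℝ) < α) :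
    ∫ y : Ed n, ‖y‖ ^ α * rexp (-‖y‖ ^ 2) =
      √π ^ n * Gamma ((n + α) / 2) / Gamma (n / 2) := by
  have : Nonempty (Fin n) := ⟨⟨0, hn⟩⟩
  rw [integral_fun_norm_addHaar volume (fun t : ℝ => t ^ α * rexp (-t ^ 2))]
  simp only [finrank_euclideanSpace, Fintype.card_fin, smul_eq_mul, nsmul_eq_mul]
  rw [integral_Ioi_pow_mul_rpow_mul_exp (by rw [Nat.cast_pred hn]; linarith), measureReal_def,
    EuclideanSpace.volume_ball]
  have : (0 : ℝ) < n := Nat.cast_pos.2 hn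
  have hexp : ((n - 1 : ℕ) + α + 1) / 2 = ((n : ℝ) + α) / 2 := by
    rw [Nat.cast_pred hn]; ring
  have : 0 < Gamma ((n : ℝ) / 2) := Gamma_pos_of_pos (by positivity)
  rw [hexp, Fintype.card_fin, Gamma_add_one (by positivity)]
  simp only [ENNReal.ofReal_one, one_pow, one_mul]
  rw [ENNReal.toReal_ofReal (by positivity)]
  field_simp

theorem integral_rpow_tnorm_mul_exp (n : ℕ) (α : ℝ) :
    ∫ y : Ed (n + 1), tnorm (n + 1) y ^ α * rexp (-‖y‖ ^ 2) =
      √π * ∫ y : Ed n, ‖y‖ ^ α * rexp (-‖y‖ ^ 2) := by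
  rw [← (PiLp.volume_preserving_toLp (Fin (n + 1))).integral_comp
      (MeasurableEquiv.toLp 2 _).measurableEmbedding,
    ← (PiLp.volume_preserving_toLp (Fin n)).integral_comp
      (MeasurableEquiv.toLp 2 _).measurableEmbedding,
    ← (volume_preserving_piFinSuccAbove (fun _ : Fin (n + 1) => ℝ) (Fin.last n)).symm.integral_comp
      (MeasurableEquiv.measurableEmbedding _)]
  have hgauss : ∫ x : ℝ, rexp (-x ^ 2) = √π := by simpa using integral_gaussian 1
  rw [← hgauss, Measure.volume_eq_prod, ← integral_prod_mul]
  refine integral_congr_ae (Eventually.of_forall ?_)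
  rintro ⟨x, v⟩
  have htnorm : tnorm (n + 1) (WithLp.toLp 2 ((MeasurableEquiv.piFinSuccAbove (fun _ => ℝ)
      (Fin.last n)).symm (x, v))) = ‖(WithLp.toLp 2 v : Ed n)‖ := by
    rw [tnorm, EuclideanSpace.norm_eq, Fin.sum_univ_castSucc]
    simp [MeasurableEquiv.piFinSuccAbove, Fin.insertNthEquiv]
  have hnorm : ‖(WithLp.toLp 2 ((MeasurableEquiv.piFinSuccAbove (fun _ => ℝ)
      (Fin.last n)).symm (x, v)) : Ed (n + 1))‖ ^ 2 = x ^ 2 + ‖(WithLp.toLp 2 v : Ed n)‖ ^ 2 := by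
    rw [EuclideanSpace.norm_sq_eq, EuclideanSpace.norm_sq_eq, Fin.sum_univ_castSucc]
    simp [MeasurableEquiv.piFinSuccAbove, Fin.insertNthEquiv, add_comm]
  simp only [htnorm, hnorm]
  rw [neg_add, exp_add]
  ring

theorem integral_sphere_rpow_tnorm {α : ℝ} (hd : 2 ≤ d) (hα : 0 ≤ α) :
    ∫ θ : sphere (0 : Ed d) 1, tnorm d θ ^ α ∂(volume : Measure (Ed d)).toSphere =
      2 * π ^ ((d : ℝ) / 2) * Gamma ((d - 1 + α) / 2) /
        (Gamma ((d - 1) / 2) * Gamma ((d + α) / 2)) := by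
  have hgauss := integral_rpow_tnorm_mul_exp_eq_sphere (d := d) (by omega) hα
  obtain ⟨n, rfl⟩ : ∃ n, d = n + 1 := ⟨d - 1, by omega⟩
  have hn : 0 < n := by omega
  have hn' : (0 : ℝ) < n := Nat.cast_pos.2 hn
  rw [integral_rpow_tnorm_mul_exp, integral_rpow_norm_mul_exp hn (by linarith)]
    at hgauss
  have hcast : ((n + 1 : ℕ) : ℝ) - 1 = n := by push_cast; ring
  have hpi : π ^ (((n + 1 : ℕ) : ℝ) / 2) = √π ^ n * √π := by
    rw [← pow_succ, ← rpow_natCast, sqrt_eq_rpow, ← rpow_mul pi_pos.le]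
    congr 1; ring
  have hG : 0 < Gamma ((n : ℝ) / 2) := Gamma_pos_of_pos (by positivity)
  have hGα : 0 < Gamma ((((n + 1 : ℕ) : ℝ) + α) / 2) := Gamma_pos_of_pos (by positivity)
  rw [hcast, hpi, eq_div_iff (by positivity)]
  rw [eq_comm, ← mul_div_assoc, eq_div_iff hG.ne'] at hgauss
  linear_combination 2 * hgauss

end SphereMoment

/-! ### The fractional Laplacian of bounded functions that are `C²` at a point -/

section TruncatedIntegral

variable {E F : Type*} [NormedAddCommGroup E] [MeasurableSpace E] [BorelSpace E]
  [NormedAddCommGroup F] [NormedSpace ℝ F]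

theorem measurableSet_lt_norm (δ : ℝ) : MeasurableSet {z : E | δ < ‖z‖} :=
  measurableSet_lt measurable_const measurable_norm

theorem tendsto_setIntegral_lt_norm {μ : Measure E} [NullSingletonClass μ] {G : E → F}
    (hG : Integrable G μ) :
    Tendsto (fun δ : ℝ => ∫ z in {z | δ < ‖z‖}, G z ∂μ) (𝓝[>] 0) (𝓝 (∫ z, G z ∂μ)) := by
  simp_rw [← integral_indicator (measurableSet_lt_norm _)]
  refine tendsto_integral_filter_of_dominated_convergence (fun z => ‖G z‖)
    (Eventually.of_forall fun δ => hG.aestronglyMeasurable.indicator (measurableSet_lt_norm δ))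
    (Eventually.of_forall fun δ => Eventually.of_forall fun z => norm_indicator_le_norm_self _ _)
    hG.norm ?_
  filter_upwards [compl_mem_ae_iff.2 (measure_singleton (0 : E))] with z hz
  have hlt : ∀ᶠ δ in 𝓝[>] (0 : ℝ), δ < ‖z‖ :=
    (gt_mem_nhds (norm_pos_iff.2 hz)).filter_mono nhdsWithin_le_nhds
  refine tendsto_const_nhds.congr' ?_
  filter_upwards [hlt] with δ hδ
  rw [indicator_of_mem (show z ∈ {z : E | δ < ‖z‖} from hδ)]

theorem setIntegral_lt_norm_sub (μ : Measure E) [μ.IsAddLeftInvariant] (x : E) (δ : ℝ)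
    (f : E → F) :
    ∫ y in {y | δ < ‖y - x‖}, f y ∂μ = ∫ z in {z | δ < ‖z‖}, f (x + z) ∂μ := by
  have hm : MeasurableSet {y : E | δ < ‖y - x‖} :=
    measurableSet_lt measurable_const (by fun_prop)
  rw [← integral_indicator hm, ← integral_indicator (measurableSet_lt_norm δ),
    ← integral_add_left_eq_self _ x]
  simp [indicator]

end TruncatedIntegral

section IsometryInvariance

variable {E F : Type*} [NormedAddCommGroup E] [InnerProductSpace ℝ E] [FiniteDimensional ℝ E]
  [MeasurableSpace E] [BorelSpace E] [NormedAddCommGroup F] [NormedSpace ℝ F]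

theorem setIntegral_lt_norm_comp_isometry (T : E ≃ₗᵢ[ℝ] E) (δ : ℝ) (f : E → F) :
    ∫ z in {z | δ < ‖z‖}, f (T z) = ∫ z in {z | δ < ‖z‖}, f z := by
  rw [← T.measurePreserving.setIntegral_preimage_emb T.toHomeomorph.measurableEmbedding f]
  simp [preimage]

theorem setIntegral_lt_norm_eq_zero_of_odd (T : E ≃ₗᵢ[ℝ] E) (δ : ℝ) {f : E → ℝ}
    (hf : ∀ z, f (T z) = -f z) : ∫ z in {z | δ < ‖z‖}, f z = 0 := by
  have h := setIntegral_lt_norm_comp_isometry T δ f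
  simp only [hf, integral_neg] at h
  linarith

end IsometryInvariance

section Kernel

variable {d : ℕ} {α : ℝ}

/-- The kernel `z ↦ |z|^{-d-α}` of the fractional Laplacian `Δ^{α/2}` on `ℝ^d`, with value
`0` at the origin unless `α = -d`. -/
noncomputable def stableKernel (d : ℕ) (α : ℝ) (z : Ed d) : ℝ := ‖z‖ ^ (-(d : ℝ) - α)

theorem stableKernel_nonneg (z : Ed d) : 0 ≤ stableKernel d α z := rpow_nonneg (norm_nonneg z) _

theorem measurable_stableKernel : Measurable (stableKernel d α) := by
  unfold stableKernel
  fun_prop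

theorem pow_pred_mul_rpow (hd : 0 < d) (s : ℝ) {t : ℝ} (ht : 0 < t) :
    t ^ (d - 1) * t ^ s = t ^ (d - 1 + s) := by
  rw [← rpow_natCast, Nat.cast_pred hd, ← rpow_add ht]

theorem integrable_min_mul_stableKernel {κ : ℝ} (hd : 0 < d) (hα : 0 < α) (hκ : α < κ) :
    Integrable fun z : Ed d => min (‖z‖ ^ κ) 1 * stableKernel d α z := by
  have : Nonempty (Fin d) := ⟨⟨0, hd⟩⟩
  unfold stableKernel
  rw [integrable_fun_norm_addHaar volume (f := fun t : ℝ => min (t ^ κ) 1 * t ^ (-(d : ℝ) - α)),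
    ← Ioc_union_Ioi_eq_Ioi zero_le_one, integrableOn_union]
  simp only [finrank_euclideanSpace, Fintype.card_fin, smul_eq_mul]
  constructor
  · have hnear : IntegrableOn (fun t : ℝ => t ^ (κ - α - 1)) (Ioc 0 1) :=
      (intervalIntegral.intervalIntegrable_rpow' (by linarith)).1
    refine hnear.congr_fun (fun t ht => ?_) measurableSet_Ioc
    simp only
    rw [min_eq_left (rpow_le_one ht.1.le ht.2 (by linarith)), mul_left_comm,
      pow_pred_mul_rpow hd _ ht.1, ← rpow_add ht.1]
    congr 1; ring
  · have hfar : IntegrableOn (fun t : ℝ => t ^ (-1 - α)) (Ioi 1) :=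
      integrableOn_Ioi_rpow_of_lt (by linarith) one_pos
    refine hfar.congr_fun (fun t (ht : 1 < t) => ?_) measurableSet_Ioi
    simp only
    rw [min_eq_right (one_le_rpow ht.le (by linarith)), one_mul,
      pow_pred_mul_rpow hd _ (one_pos.trans ht)]
    congr 1; ring

theorem integrableOn_stableKernel {δ : ℝ} (hd : 0 < d) (hα : 0 < α) (hδ : 0 < δ) :
    IntegrableOn (stableKernel d α) {z | δ < ‖z‖} := by
  have hm : 0 < min (δ ^ (α + 1)) 1 := lt_min (by positivity) one_pos
  refine ((integrable_min_mul_stableKernel hd hα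
    (lt_add_one α)).integrableOn.const_mul (min (δ ^ (α + 1)) 1)⁻¹).mono'
    measurable_stableKernel.aestronglyMeasurable ?_
  filter_upwards [ae_restrict_mem (measurableSet_lt_norm δ)] with z (hz : δ < ‖z‖)
  have hk := stableKernel_nonneg (α := α) z
  rw [norm_eq_abs, abs_of_nonneg hk, inv_mul_eq_div, le_div_iff₀ hm, mul_comm]
  gcongr

theorem integrableOn_mul_stableKernel {δ B : ℝ} (hd : 0 < d) (hα : 0 < α) (hδ : 0 < δ)
    {f : Ed d → ℝ} (hf : Measurable f) (hB : ∀ z, |f z| ≤ B) :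
    IntegrableOn (fun z => f z * stableKernel d α z) {z | δ < ‖z‖} :=
  (integrableOn_stableKernel hd hα hδ).bdd_mul hf.aestronglyMeasurable (Eventually.of_forall hB)

theorem fracLapAt_iff {f : Ed d → ℝ} {x : Ed d} {L : ℝ} :
    fracLapAt d α f x L ↔
      Tendsto (fun δ : ℝ => fracConst d α *
        ∫ z in {z | δ < ‖z‖}, (f (x + z) - f x) * stableKernel d α z) (𝓝[>] 0) (𝓝 L) := by
  simp only [fracLapAt, setIntegral_lt_norm_sub, add_sub_cancel_left, stableKernel]

end Kernel

section SecondDifference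

variable {E F : Type*} [NormedAddCommGroup E]

/-- The symmetric second difference of `f` at `x` with increment `z`. -/
def secondDiff (f : E → ℝ) (x z : E) : ℝ := f (x + z) + f (x - z) - 2 * f x

theorem abs_secondDiff_le {f : E → ℝ} {M : ℝ} (hM : ∀ y, |f y| ≤ M) (x z : E) :
    |secondDiff f x z| ≤ 4 * M := by
  have hp := abs_le.1 (hM (x + z))
  have hm := abs_le.1 (hM (x - z))
  have hx := abs_le.1 (hM x)
  rw [secondDiff, abs_le]
  constructor <;> linarith

theorem exists_abs_le_mul_min_sq {g : E → ℝ} {M : ℝ} (hM : ∀ z, |g z| ≤ M)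
    (hg : g =O[𝓝 0] fun z => ‖z‖ ^ 2) : ∃ K, ∀ z, |g z| ≤ K * min (‖z‖ ^ 2) 1 := by
  obtain ⟨K, hK, hbound⟩ := hg.exists_nonneg
  obtain ⟨r, hr, hball⟩ := Metric.eventually_nhds_iff_ball.1 hbound.bound
  have hM0 : 0 ≤ M := (abs_nonneg _).trans (hM 0)
  refine ⟨max (K + M) (M / r ^ 2), fun z => ?_⟩
  rw [mul_min_of_nonneg _ _ (by positivity), le_min_iff]
  refine ⟨?_, ?_⟩
  · rcases lt_or_ge ‖z‖ r with hz | hz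
    · calc |g z| ≤ K * ‖z‖ ^ 2 := by simpa using hball z (by simpa using hz)
        _ ≤ _ := by gcongr; exact le_max_of_le_left (by linarith)
    · calc |g z| ≤ M := hM z
        _ = M / r ^ 2 * r ^ 2 := by field_simp
        _ ≤ _ := by gcongr; exact le_max_right _ _
  · rw [mul_one]
    exact (hM z).trans (le_max_of_le_left (by linarith))

variable [NormedSpace ℝ E] [NormedAddCommGroup F] [NormedSpace ℝ F]

theorem norm_sub_sub_fderiv_le {f : E → F} {f' : E → E →L[ℝ] F} {u v : E} {K : ℝ} (hK : 0 ≤ K)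
    (hf : ∀ y ∈ segment ℝ u v, HasFDerivAt f (f' y) y)
    (hf' : ∀ y ∈ segment ℝ u v, ‖f' y - f' u‖ ≤ K * ‖y - u‖) :
    ‖f v - f u - f' u (v - u)‖ ≤ K * ‖v - u‖ ^ 2 := by
  rw [sq, ← mul_assoc]
  refine (convex_segment u v).norm_image_sub_le_of_norm_hasFDerivWithin_le'
    (fun y hy => (hf y hy).hasFDerivWithinAt) (fun y hy => (hf' y hy).trans ?_)
    (left_mem_segment ℝ u v) (right_mem_segment ℝ u v)
  exact mul_le_mul_of_nonneg_left (norm_sub_le_of_mem_segment hy) hK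

theorem isBigO_secondDiff {f : E → ℝ} {x : E} (hf : ContDiffAt ℝ 2 f x) :
    secondDiff f x =O[𝓝 0] fun z => ‖z‖ ^ 2 := by
  obtain ⟨K, t, ht, hLip⟩ :=
    (hf.fderiv_right (m := 1) (by norm_num)).exists_lipschitzOnWith
  have hdiff : ∀ᶠ y in 𝓝 x, DifferentiableAt ℝ f y :=
    (hf.eventually (by simp)).mono fun y hy => hy.differentiableAt (by simp)
  obtain ⟨r, hr, hball⟩ := Metric.mem_nhds_iff.1 (inter_mem ht hdiff)
  have htaylor : ∀ z ∈ ball (0 : E) r,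
      |f (x + z) - f x - fderiv ℝ f x z| ≤ K * ‖z‖ ^ 2 := fun z hz => by
    have hseg : segment ℝ x (x + z) ⊆ ball x r :=
      (convex_ball x r).segment_subset (mem_ball_self hr) (by simpa using hz)
    simpa using norm_sub_sub_fderiv_le K.2
      (fun y hy => (hball (hseg hy)).2.hasFDerivAt)
      (fun y hy => hLip.norm_sub_le (hball (hseg hy)).1 (hball (mem_ball_self hr)).1)
  refine Asymptotics.IsBigO.of_bound (2 * K) ?_
  filter_upwards [ball_mem_nhds (0 : E) hr] with z hz
  have hp := htaylor z hz
  have hm := htaylor (-z) (by simpa using hz)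
  rw [← sub_eq_add_neg, map_neg, norm_neg] at hm
  rw [norm_eq_abs, norm_eq_abs, abs_of_nonneg (sq_nonneg ‖z‖), secondDiff]
  rw [abs_le] at hp hm ⊢
  constructor <;> linarith

end SecondDifference

section FracLap

variable {d : ℕ} {α M : ℝ} {f : Ed d → ℝ} {x : Ed d}

theorem measurable_secondDiff (hf : Measurable f) (x : Ed d) : Measurable (secondDiff f x) := by
  unfold secondDiff
  fun_prop

theorem integrable_secondDiff_mul_stableKernel (hd : 0 < d) (hα : 0 < α) (hα2 : α < 2)
    (hf : Measurable f) (hM : ∀ y, |f y| ≤ M) (hx : ContDiffAt ℝ 2 f x) :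
    Integrable fun z => secondDiff f x z * stableKernel d α z := by
  obtain ⟨K, hK⟩ := exists_abs_le_mul_min_sq (abs_secondDiff_le hM x) (isBigO_secondDiff hx)
  refine ((integrable_min_mul_stableKernel hd hα hα2).const_mul K).mono'
    ((measurable_secondDiff hf x).mul measurable_stableKernel).aestronglyMeasurable
    (Eventually.of_forall fun z => ?_)
  have hk := stableKernel_nonneg (α := α) z
  rw [norm_mul, norm_eq_abs, norm_eq_abs, abs_of_nonneg hk, ← mul_assoc, rpow_two]
  exact mul_le_mul_of_nonneg_right (hK z) hk

theorem setIntegral_sub_mul_stableKernel {δ : ℝ} (hd : 0 < d) (hα : 0 < α) (hδ : 0 < δ)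
    (hf : Measurable f) (hM : ∀ y, |f y| ≤ M) :
    ∫ z in {z | δ < ‖z‖}, (f (x + z) - f x) * stableKernel d α z =
      1 / 2 * ∫ z in {z | δ < ‖z‖}, secondDiff f x z * stableKernel d α z := by
  have hbound : ∀ y, |f y - f x| ≤ M + M := fun y =>
    (abs_sub _ _).trans (add_le_add (hM y) (hM x))
  have hplus := integrableOn_mul_stableKernel hd hα hδ
    (f := fun z => f (x + z) - f x) (by fun_prop) fun z => hbound _
  have hminus := integrableOn_mul_stableKernel hd hα hδ
    (f := fun z => f (x - z) - f x) (by fun_prop) fun z => hbound _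
  have hreflect : ∫ z in {z | δ < ‖z‖}, (f (x - z) - f x) * stableKernel d α z =
      ∫ z in {z | δ < ‖z‖}, (f (x + z) - f x) * stableKernel d α z := by
    rw [← setIntegral_lt_norm_comp_isometry (LinearIsometryEquiv.neg ℝ)]
    simp [stableKernel, sub_eq_add_neg]
  have hsum := integral_add hplus hminus
  simp only [← add_mul] at hsum
  rw [hreflect] at hsum
  have hdiff : ∀ z, secondDiff f x z = f (x + z) - f x + (f (x - z) - f x) := fun z => by
    rw [secondDiff]; ring
  simp_rw [hdiff, hsum]
  ring

theorem fracLapAt_of_contDiffAt (hd : 0 < d) (hα : 0 < α) (hα2 : α < 2)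
    (hf : Measurable f) (hM : ∀ y, |f y| ≤ M) (hx : ContDiffAt ℝ 2 f x) :
    fracLapAt d α f x
      (fracConst d α * (1 / 2 * ∫ z, secondDiff f x z * stableKernel d α z)) := by
  have : Nonempty (Fin d) := ⟨⟨0, hd⟩⟩
  rw [fracLapAt_iff]
  refine (((tendsto_setIntegral_lt_norm (integrable_secondDiff_mul_stableKernel hd hα hα2 hf hM
    hx)).const_mul (1 / 2)).const_mul (fracConst d α)).congr' ?_
  filter_upwards [self_mem_nhdsWithin] with δ hδ
  rw [setIntegral_sub_mul_stableKernel hd hα hδ hf hM]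

end FracLap

/-! ### The function `s_ε` -/

section ExitTime

variable {d : ℕ} {α ε : ℝ} {x : Ed d}

theorem Cexit_pos (hd : 2 ≤ d) (hα : 0 < α) : 0 < Cexit d α := by
  have hd' : (2 : ℝ) ≤ d := by exact_mod_cast hd
  have hnum : 0 < Gamma (((d : ℝ) - 1) / 2) := Gamma_pos_of_pos (by linarith)
  have hden : 0 < Gamma (((d : ℝ) - 1 + α) / 2) := Gamma_pos_of_pos (by linarith)
  have : 0 < Gamma (1 + α / 2) := Gamma_pos_of_pos (by linarith)
  unfold Cexit
  positivity

theorem abs_sExit_le (hd : 2 ≤ d) (hα : 0 < α) (hε : 0 ≤ ε) (y : Ed d) :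
    |sExit d α ε y| ≤ Cexit d α * ε ^ α := by
  have hC := Cexit_pos hd hα
  have hpow : ε ^ α = (ε ^ 2) ^ (α / 2) := by
    rw [← rpow_natCast, ← rpow_mul hε]; congr 1; push_cast; ring
  rw [sExit, abs_of_nonneg (by positivity), hpow]
  gcongr
  exact max_le (by linarith [sq_nonneg (tnorm d y)]) (sq_nonneg _)

theorem measurable_sExit : Measurable (sExit d α ε) := by
  have := (continuous_tnorm (d := d)).measurable
  unfold sExit
  fun_prop

theorem sExit_add (x z : Ed d) :
    sExit d α ε (x + z) = Cexit d α *
      (max (ε ^ 2 - tnorm d x ^ 2 - 2 * ⟪tproj d x, z⟫ - tnorm d z ^ 2) 0) ^ (α / 2) := by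
  rw [sExit, tnorm_add_sq]
  congr 3; ring

theorem sq_sub_tnorm_sq_pos (hx : tnorm d x < ε) : 0 < ε ^ 2 - tnorm d x ^ 2 :=
  sub_pos.2 (pow_lt_pow_left₀ hx (tnorm_nonneg x) two_ne_zero)

theorem contDiffAt_sExit (hx : tnorm d x < ε) {n : WithTop ℕ∞} :
    ContDiffAt ℝ n (sExit d α ε) x := by
  have hsmooth : ContDiff ℝ n fun y : Ed d => ε ^ 2 - tnorm d y ^ 2 := by
    simp_rw [tnorm_eq_norm_tproj]
    exact contDiff_const.sub ((LinearMap.toContinuousLinearMap (tproj d)).contDiff.norm_sq ℝ)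
  refine ((contDiffAt_const (c := Cexit d α)).mul (hsmooth.contDiffAt.rpow_const_of_ne (p := α / 2)
    (sq_sub_tnorm_sq_pos hx).ne')).congr_of_eventuallyEq (f₁ := sExit d α ε) ?_
  filter_upwards [continuous_tnorm.continuousAt.eventually_lt_const hx] with y hy
  rw [sExit, max_eq_left (sq_sub_tnorm_sq_pos hy).le]

theorem secondDiff_sExit_smul (hx : tnorm d x < ε) (θ : Ed d) (t : ℝ) :
    secondDiff (sExit d α ε) x (t • θ) =
      -Cexit d α * (2 * (ε ^ 2 - tnorm d x ^ 2) ^ (α / 2) -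
        max (ε ^ 2 - tnorm d x ^ 2 - 2 * ⟪tproj d x, θ⟫ * t - tnorm d θ ^ 2 * t ^ 2) 0 ^ (α / 2) -
        max (ε ^ 2 - tnorm d x ^ 2 + 2 * ⟪tproj d x, θ⟫ * t - tnorm d θ ^ 2 * t ^ 2) 0 ^
          (α / 2)) := by
  rw [secondDiff, sub_eq_add_neg x, ← neg_smul, sExit_add, sExit_add, sExit,
    max_eq_left (sq_sub_tnorm_sq_pos hx).le]
  simp only [inner_smul_right, tnorm_smul, abs_neg, mul_pow, sq_abs]
  ring_nf

theorem integral_ray_secondDiff_sExit (hd : 2 ≤ d) (hα : 0 < α) (hα2 : α < 2)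
    (hx : tnorm d x < ε) {θ : Ed d} (hθ : ‖θ‖ = 1)
    (hint : IntegrableOn (fun t : ℝ => t ^ (d - 1) *
      (secondDiff (sExit d α ε) x (t • θ) * stableKernel d α (t • θ))) (Ioi 0)) :
    ∫ t in Ioi (0 : ℝ), t ^ (d - 1) *
        (secondDiff (sExit d α ε) x (t • θ) * stableKernel d α (t • θ)) =
      -(Cexit d α * (Gamma (α / 2) * Gamma (1 - α / 2))) * tnorm d θ ^ α := by
  have hP := sq_sub_tnorm_sq_pos hx
  have hslice := secondDiff_sExit_smul (α := α) hx θ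
  set P := ε ^ 2 - tnorm d x ^ 2
  set β := ⟪tproj d x, θ⟫
  have hray : EqOn (fun t : ℝ => t ^ (d - 1) *
      (secondDiff (sExit d α ε) x (t • θ) * stableKernel d α (t • θ)))
      (fun t => -Cexit d α * ((2 * P ^ (α / 2) -
        max (P - 2 * β * t - tnorm d θ ^ 2 * t ^ 2) 0 ^ (α / 2) -
        max (P + 2 * β * t - tnorm d θ ^ 2 * t ^ 2) 0 ^ (α / 2)) * t ^ (-1 - 2 * (α / 2))))
      (Ioi 0) := fun t (ht : 0 < t) => by
    have hpow : t ^ (-1 - 2 * (α / 2)) = t ^ (d - 1) * t ^ (-(d : ℝ) - α) := by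
      rw [pow_pred_mul_rpow (by omega) _ ht]; congr 1; ring
    simp only
    rw [hslice, stableKernel, norm_smul, hθ, norm_eq_abs, abs_of_pos ht, mul_one, hpow]
    ring
  rw [setIntegral_congr_fun measurableSet_Ioi hray, integral_const_mul]
  rcases (tnorm_nonneg θ).eq_or_lt with hθ0 | hθ0
  · have hβ0 : β = 0 := by
      simpa [← hθ0] using abs_inner_tproj_le x θ
    rw [← hθ0, hβ0, zero_rpow hα.ne']
    simp [max_eq_left hP.le, two_mul]
  · have hC : -Cexit d α ≠ 0 := neg_ne_zero.2 (Cexit_pos hd hα).ne'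
    rw [integral_secondDiff_quadratic (by linarith) (by linarith) hP (by positivity)
      ((integrable_const_mul_iff (isUnit_iff_ne_zero.2 hC) _).1
        ((integrableOn_congr_fun hray measurableSet_Ioi).1 hint)),
      ← rpow_natCast, ← rpow_mul hθ0.le, Nat.cast_ofNat, mul_div_cancel₀ _ two_ne_zero]
    ring

theorem integral_secondDiff_sExit_mul_stableKernel (hd : 2 ≤ d) (hα : 0 < α) (hα2 : α < 2)
    (hx : tnorm d x < ε) :
    ∫ z, secondDiff (sExit d α ε) x z * stableKernel d α z =
      -(Cexit d α * (Gamma (α / 2) * Gamma (1 - α / 2))) *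
        ∫ θ : sphere (0 : Ed d) 1, tnorm d θ ^ α ∂(volume : Measure (Ed d)).toSphere := by
  have : Nonempty (Fin d) := ⟨⟨0, by omega⟩⟩
  have hint := integrable_secondDiff_mul_stableKernel (by omega) hα hα2 measurable_sExit
    (abs_sExit_le hd hα ((tnorm_nonneg x).trans hx.le)) (contDiffAt_sExit hx)
  rw [integral_polar volume hint, ← integral_const_mul]
  refine integral_congr_ae ?_
  filter_upwards [ae_integrableOn_ray volume hint] with θ hθ
  simp only [finrank_euclideanSpace, Fintype.card_fin, smul_eq_mul] at hθ ⊢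
  exact integral_ray_secondDiff_sExit hd hα hα2 hx (norm_eq_of_mem_sphere θ) hθ

theorem fracConst_mul_sphere_moment (hd : 2 ≤ d) (hα : 0 < α) (hα2 : α < 2) :
    fracConst d α * (1 / 2 * (-(Cexit d α * (Gamma (α / 2) * Gamma (1 - α / 2))) *
      ∫ θ : sphere (0 : Ed d) 1, tnorm d θ ^ α ∂(volume : Measure (Ed d)).toSphere)) = -1 := by
  have hd' : (2 : ℝ) ≤ d := by exact_mod_cast hd
  have hGpred : Gamma (((d : ℝ) - 1) / 2) ≠ 0 := (Gamma_pos_of_pos (by linarith)).ne'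
  have hGpredα : Gamma (((d : ℝ) - 1 + α) / 2) ≠ 0 := (Gamma_pos_of_pos (by linarith)).ne'
  have hGdα : Gamma (((d : ℝ) + α) / 2) ≠ 0 := (Gamma_pos_of_pos (by linarith)).ne'
  have hG : Gamma (α / 2) ≠ 0 := (Gamma_pos_of_pos (by linarith)).ne'
  have hGrefl : Gamma (1 - α / 2) ≠ 0 := (Gamma_pos_of_pos (by linarith)).ne'
  have htwo : (2 : ℝ) ^ (α - 1) = 2 ^ α / 2 := by rw [rpow_sub two_pos, rpow_one]
  have hpi : π ^ (-(d : ℝ) / 2) = (π ^ ((d : ℝ) / 2))⁻¹ := by rw [← rpow_neg pi_pos.le, neg_div]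
  rw [integral_sphere_rpow_tnorm hd hα.le, fracConst, Cexit, add_comm 1 (α / 2),
    Gamma_add_one (by positivity), htwo, hpi]
  -- `field_simp` would otherwise rewrite the argument `1 - α / 2`.
  generalize Gamma (1 - α / 2) = G at hGrefl ⊢
  field_simp

theorem fracLapAt_sExit (hd : 2 ≤ d) (hα : 0 < α) (hα2 : α < 2) (hx : tnorm d x < ε) :
    fracLapAt d α (sExit d α ε) x (-1) := by
  rw [← fracConst_mul_sphere_moment hd hα hα2,
    ← integral_secondDiff_sExit_mul_stableKernel hd hα hα2 hx]
  exact fracLapAt_of_contDiffAt (by omega) hα hα2 measurable_sExit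
    (abs_sExit_le hd hα ((tnorm_nonneg x).trans hx.le)) (contDiffAt_sExit hx)

end ExitTime

/-! ### The Riesz kernel `h` -/

section RealPower

theorem abs_rpow_sub_rpow_le {a u v : ℝ} (ha : 0 ≤ a) (ha1 : a ≤ 1) (hu : 0 ≤ u) (hv : 0 ≤ v) :
    |u ^ a - v ^ a| ≤ |u - v| ^ a := by
  wlog h : v ≤ u generalizing u v
  · rw [abs_sub_comm, abs_sub_comm u v]
    exact this hv hu (not_le.1 h).le
  have hmono : v ^ a ≤ u ^ a := by gcongr
  rw [abs_of_nonneg (sub_nonneg.2 hmono), abs_of_nonneg (sub_nonneg.2 h), sub_le_iff_le_add]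
  simpa using rpow_add_le_add_rpow (sub_nonneg.2 h) hv ha ha1

theorem min_one_le_rpow {a u : ℝ} (ha : 0 ≤ a) (ha1 : a ≤ 1) (hu : 0 < u) : min u 1 ≤ u ^ a := by
  rcases le_total u 1 with h | h
  · rw [min_eq_left h]
    simpa using rpow_le_rpow_of_exponent_ge hu h ha1
  · rw [min_eq_right h]
    exact one_le_rpow h ha

theorem abs_rpow_taylor_le {b m u v : ℝ} (hb : b ≤ 2) (hm : 0 < m) (hu : m ≤ u) (hv : m ≤ v) :
    |v ^ b - u ^ b - b * u ^ (b - 1) * (v - u)| ≤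
      |b * (b - 1)| * m ^ (b - 2) * (v - u) ^ 2 := by
  have hderiv : ∀ (p : ℝ), ∀ t ∈ Ici m, HasDerivAt (fun t => t ^ p) (p * t ^ (p - 1)) t :=
    fun p t ht => Real.hasDerivAt_rpow_const (Or.inl (hm.trans_le ht).ne')
  have hLip : ∀ t ∈ Ici m, |b * t ^ (b - 1) - b * u ^ (b - 1)| ≤
      |b * (b - 1)| * m ^ (b - 2) * |t - u| := fun t ht => by
    refine (convex_Ici m).norm_image_sub_le_of_norm_hasDerivWithin_le
      (fun s hs => ((hderiv (b - 1) s hs).const_mul b).hasDerivWithinAt) (fun s hs => ?_) hu ht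
    have hs0 : 0 < s := hm.trans_le hs
    rw [← mul_assoc, norm_mul, norm_eq_abs, norm_eq_abs, sub_sub, one_add_one_eq_two,
      abs_of_pos (rpow_pos_of_pos hs0 _)]
    exact mul_le_mul_of_nonneg_left (rpow_le_rpow_of_nonpos hm hs (by linarith)) (abs_nonneg _)
  have hseg : segment ℝ u v ⊆ Ici m := (convex_Ici m).segment_subset hu hv
  have htaylor := norm_sub_sub_fderiv_le (K := |b * (b - 1)| * m ^ (b - 2)) (by positivity)
    (fun t ht => (hderiv b t (hseg ht)).hasFDerivAt) (fun t ht => by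
      refine ContinuousLinearMap.opNorm_le_bound _ (by positivity) fun w => ?_
      simpa [← mul_sub, mul_comm |w|] using
        mul_le_mul_of_nonneg_right (hLip t (hseg ht)) (abs_nonneg w))
  simpa [mul_comm (v - u)] using htaylor

end RealPower

section RieszKernel

variable {d : ℕ} {α : ℝ}

theorem measurable_rieszH : Measurable (rieszH d α) := by
  unfold rieszH
  fun_prop

theorem rieszH_nonneg (y : Ed d) : 0 ≤ rieszH d α y := rpow_nonneg (norm_nonneg y) _

theorem rieszH_le_one (hα : α ≤ d) {y : Ed d} (hy : 1 ≤ ‖y‖) : rieszH d α y ≤ 1 :=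
  rpow_le_one_of_one_le_of_nonpos hy (sub_nonpos.2 hα)

theorem integrable_indicator_ball_rieszH (hd : 0 < d) (hα : 0 < α) :
    Integrable ((ball (0 : Ed d) 1).indicator (rieszH d α)) := by
  have : Nonempty (Fin d) := ⟨⟨0, hd⟩⟩
  rw [integrable_indicator_iff measurableSet_ball]
  unfold rieszH
  rw [integrableOn_fun_norm_addHaar volume (f := fun t : ℝ => t ^ (α - d))]
  simp only [finrank_euclideanSpace, Fintype.card_fin, smul_eq_mul]
  have hray : IntegrableOn (fun t : ℝ => t ^ (α - 1)) (Ioc 0 1) :=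
    (intervalIntegral.intervalIntegrable_rpow' (by linarith)).1
  refine (hray.mono_set Ioo_subset_Ioc_self).congr_fun (fun t ht => ?_) measurableSet_Ioo
  simp only
  rw [pow_pred_mul_rpow hd _ ht.1]
  congr 1; ring

/-- The factor `c(x)` in `∇h(x) = c(x) x`. -/
noncomputable def gradCoef (d : ℕ) (α : ℝ) (x : Ed d) : ℝ := (α - d) * ‖x‖ ^ (α - d - 2)

theorem abs_gradCoef_mul_norm_le (hα : α ≤ d) {x : Ed d} (hx : 1 ≤ ‖x‖) :
    |gradCoef d α x| * ‖x‖ ≤ |α - d| := by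
  have hx0 : 0 < ‖x‖ := one_pos.trans_le hx
  rw [gradCoef, abs_mul, abs_of_pos (rpow_pos_of_pos hx0 _), mul_assoc]
  refine mul_le_of_le_one_right (abs_nonneg _) ?_
  rw [← rpow_add_one hx0.ne']
  exact rpow_le_one_of_one_le_of_nonpos hx (by linarith)

theorem abs_gradCoef_le (hα : α ≤ d) {x : Ed d} (hx : 1 ≤ ‖x‖) : |gradCoef d α x| ≤ |α - d| :=
  (le_mul_of_one_le_right (abs_nonneg _) hx).trans (abs_gradCoef_mul_norm_le hα hx)

theorem abs_gradCoef_mul_tnorm_le (hα : α ≤ d) {x : Ed d} (hx : 1 ≤ ‖x‖) :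
    |gradCoef d α x| * tnorm d x ≤ |α - d| * min (tnorm d x) 1 := by
  rw [mul_min_of_nonneg _ _ (abs_nonneg _), mul_one]
  refine le_min ?_ ?_
  · exact mul_le_mul_of_nonneg_right (abs_gradCoef_le hα hx) (tnorm_nonneg x)
  · exact (mul_le_mul_of_nonneg_left (tnorm_le_norm x) (abs_nonneg _)).trans
      (abs_gradCoef_mul_norm_le hα hx)

theorem abs_rieszH_sub_sub_le (hα : α ≤ d) {x z : Ed d} (hx : 1 ≤ ‖x‖) (hz : ‖z‖ ≤ 1 / 2) :
    |rieszH d α (x + z) - rieszH d α x - gradCoef d α x * ((‖x + z‖ ^ 2 - ‖x‖ ^ 2) / 2)| ≤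
      |(α - d) / 2 * ((α - d) / 2 - 1)| * (1 / 4) ^ ((α - d) / 2 - 1) * 36 * ‖z‖ ^ 2 := by
  -- `h` is a power of `‖·‖²`, which reduces the expansion to one variable.
  have hsq : ∀ (y : Ed d) (s : ℝ), ‖y‖ ^ s = (‖y‖ ^ 2) ^ (s / 2) := fun y s => by
    rw [← rpow_natCast_mul (norm_nonneg y)]; congr 1; push_cast; ring
  have hz0 := norm_nonneg z
  have hlow : ‖x‖ - ‖z‖ ≤ ‖x + z‖ := by simpa using norm_sub_norm_le x (-z)
  have hupp : ‖x + z‖ ≤ ‖x‖ + ‖z‖ := norm_add_le x z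
  have hquarter : 1 / 4 ≤ ‖x‖ ^ 2 / 4 := by nlinarith
  have hincr : (‖x + z‖ ^ 2 - ‖x‖ ^ 2) ^ 2 ≤ (3 * (‖x‖ * ‖z‖)) ^ 2 := by
    apply sq_le_sq' <;> nlinarith
  have htaylor := abs_rpow_taylor_le (b := (α - d) / 2) (m := ‖x‖ ^ 2 / 4) (u := ‖x‖ ^ 2)
    (v := ‖x + z‖ ^ 2) (by linarith) (by linarith) (by nlinarith) (by nlinarith)
  set b := (α - d) / 2 with hb
  have hgrad : gradCoef d α x = 2 * (b * (‖x‖ ^ 2) ^ (b - 1)) := by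
    rw [gradCoef, hsq, hb]; ring_nf
  rw [rieszH, rieszH, hsq, hsq x, ← hb, hgrad]
  calc _ = |(‖x + z‖ ^ 2) ^ b - (‖x‖ ^ 2) ^ b -
          b * (‖x‖ ^ 2) ^ (b - 1) * (‖x + z‖ ^ 2 - ‖x‖ ^ 2)| := by congr 1; ring
    _ ≤ |b * (b - 1)| * (‖x‖ ^ 2 / 4) ^ (b - 2) * (3 * (‖x‖ * ‖z‖)) ^ 2 :=
        htaylor.trans (by gcongr)
    _ = |b * (b - 1)| * (‖x‖ ^ 2 / 4) ^ (b - 1) * 36 * ‖z‖ ^ 2 := by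
        rw [show b - 1 = b - 2 + 1 by ring, rpow_add_one (by positivity)]; ring
    _ ≤ |b * (b - 1)| * (1 / 4) ^ (b - 1) * 36 * ‖z‖ ^ 2 := by
        gcongr ?_ * _ * _
        exact mul_le_mul_of_nonneg_left
          (rpow_le_rpow_of_nonpos (by norm_num) hquarter (by linarith)) (abs_nonneg _)

theorem exists_rieszH_taylor_bound (hα : α ≤ d) :
    ∃ K : ℝ, 0 ≤ K ∧ ∀ x z : Ed d, 1 ≤ ‖x‖ → ‖z‖ ≤ 1 / 2 →
      |rieszH d α (x + z) - rieszH d α x - gradCoef d α x * ⟪x, z⟫| ≤ K * ‖z‖ ^ 2 := by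
  refine ⟨|(α - d) / 2 * ((α - d) / 2 - 1)| * (1 / 4) ^ ((α - d) / 2 - 1) * 36 + |α - d| / 2,
    by positivity, fun x z hx hz => ?_⟩
  have htaylor := abs_rieszH_sub_sub_le hα hx hz
  have hgrad : |gradCoef d α x * (‖z‖ ^ 2 / 2)| ≤ |α - d| * (‖z‖ ^ 2 / 2) := by
    rw [abs_mul, abs_of_nonneg (a := ‖z‖ ^ 2 / 2) (by positivity)]
    exact mul_le_mul_of_nonneg_right (abs_gradCoef_le hα hx) (by positivity)
  rw [norm_add_sq_real] at htaylor
  rw [abs_le] at htaylor hgrad ⊢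
  constructor <;> linarith

end RieszKernel

/-! ### The product `h s_ε` -/

section Product

variable {d : ℕ} {α : ℝ}

theorem fracLapAt_mul {f g odd rem : Ed d → ℝ} {x : Ed d} {L : ℝ} (hd : 0 < d)
    (hg : fracLapAt d α g x L)
    (hg_int : ∀ δ > 0, IntegrableOn (fun z => (g (x + z) - g x) * stableKernel d α z)
      {z | δ < ‖z‖})
    (hodd_int : ∀ δ > 0, IntegrableOn (fun z => odd z * stableKernel d α z) {z | δ < ‖z‖})
    (hodd : ∀ δ > 0, ∫ z in {z | δ < ‖z‖}, odd z * stableKernel d α z = 0)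
    (hrem : Integrable fun z => rem z * stableKernel d α z)
    (hsplit : ∀ z, (f (x + z) - f x) * g (x + z) = odd z + rem z) :
    fracLapAt d α (fun y => f y * g y) x
      (f x * L + fracConst d α * ∫ z, rem z * stableKernel d α z) := by
  have : Nonempty (Fin d) := ⟨⟨0, hd⟩⟩
  rw [fracLapAt_iff] at hg ⊢
  refine ((hg.const_mul (f x)).add
    ((tendsto_setIntegral_lt_norm hrem).const_mul (fracConst d α))).congr' ?_
  filter_upwards [self_mem_nhdsWithin] with δ hδ
  have hexpand : ∀ z, (f (x + z) * g (x + z) - f x * g x) * stableKernel d α z =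
      f x * ((g (x + z) - g x) * stableKernel d α z) + odd z * stableKernel d α z +
        rem z * stableKernel d α z := fun z => by
    linear_combination stableKernel d α z * hsplit z
  simp_rw [hexpand]
  have hmain := (hg_int δ hδ).const_mul (f x)
  have hmain_odd : IntegrableOn (fun z => f x * ((g (x + z) - g x) * stableKernel d α z) +
      odd z * stableKernel d α z) {z | δ < ‖z‖} := hmain.add (hodd_int δ hδ)
  rw [integral_add hmain_odd hrem.integrableOn, integral_add hmain (hodd_int δ hδ),
    integral_const_mul, hodd δ hδ]
  ring

theorem integrableOn_indicator_ball_mul_stableKernel {M r δ : ℝ} (hd : 0 < d) (hα : 0 < α)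
    (hδ : 0 < δ) {g : Ed d → ℝ} (hg : Measurable g) (hM : ∀ z, |g z| ≤ M * ‖z‖) :
    IntegrableOn (fun z => (ball 0 r).indicator g z * stableKernel d α z) {z | δ < ‖z‖} := by
  refine integrableOn_mul_stableKernel (B := |M| * |r|) hd hα hδ (hg.indicator measurableSet_ball)
    fun z => ?_
  by_cases hz : z ∈ ball 0 r
  · have hzr : ‖z‖ ≤ |r| := (mem_ball_zero_iff.1 hz).le.trans (le_abs_self r)
    rw [indicator_of_mem hz]
    exact (hM z).trans (mul_le_mul (le_abs_self M) hzr (norm_nonneg z) (abs_nonneg M))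
  · rw [indicator_of_notMem hz, abs_zero]
    positivity

theorem setIntegral_indicator_ball_mul_stableKernel_eq_zero (T : Ed d ≃ₗᵢ[ℝ] Ed d) (r δ : ℝ)
    {g : Ed d → ℝ} (hg : ∀ z, g (T z) = -g z) :
    ∫ z in {z | δ < ‖z‖}, (ball 0 r).indicator g z * stableKernel d α z = 0 :=
  setIntegral_lt_norm_eq_zero_of_odd T δ fun z => by
    by_cases hz : ‖z‖ < r <;> simp [indicator, hz, hg, stableKernel]

end Product

section HolderRegularity

variable {d : ℕ} {α ε : ℝ} {x : Ed d}

theorem abs_max_sq_sub_sub_le {p q r : ℝ} (hp : 0 ≤ p) (hq : 0 ≤ q) (hpε : p ≤ ε)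
    (hqp : |q - p| ≤ r) : |max (ε ^ 2 - q ^ 2) 0 - max (ε ^ 2 - p ^ 2) 0| ≤ 2 * ε * r := by
  have hqp' := abs_le.1 hqp
  rw [max_eq_left (a := ε ^ 2 - p ^ 2) (by nlinarith)]
  rcases le_total q ε with hqε | hqε
  · have hfactor : ε ^ 2 - q ^ 2 - (ε ^ 2 - p ^ 2) = (q + p) * -(q - p) := by ring
    rw [max_eq_left (by nlinarith), hfactor, abs_mul, abs_neg, abs_of_nonneg (add_nonneg hq hp)]
    exact mul_le_mul (by linarith) hqp (abs_nonneg _) (by linarith)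
  · rw [max_eq_right (by nlinarith), zero_sub, abs_neg, abs_of_nonneg (by nlinarith)]
    nlinarith

theorem abs_sExit_sub_le (hd : 2 ≤ d) (hα : 0 < α) (hα2 : α ≤ 2) (hx : tnorm d x < ε) (z : Ed d) :
    |sExit d α ε (x + z) - sExit d α ε x| ≤ Cexit d α * (2 * ε * ‖z‖) ^ (α / 2) := by
  have hC := Cexit_pos hd hα
  rw [sExit, sExit, ← mul_sub, abs_mul, abs_of_pos hC]
  refine mul_le_mul_of_nonneg_left ?_ hC.le
  refine (abs_rpow_sub_rpow_le (by linarith) (by linarith) (le_max_right _ _)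
    (le_max_right _ _)).trans (rpow_le_rpow (abs_nonneg _) ?_ (by linarith))
  refine abs_max_sq_sub_sub_le (tnorm_nonneg _) (tnorm_nonneg _) hx.le ?_
  simpa using abs_tnorm_sub_le x (x + z)

theorem sExit_add_reflLast (x z : Ed d) :
    sExit d α ε (x + reflLast d z) = sExit d α ε (x + z) := by
  rw [sExit, sExit, tnorm_eq_norm_tproj, tnorm_eq_norm_tproj, map_add, map_add, tproj_reflLast]

theorem min_one_mul_rpow_le {a t : ℝ} (ha : 0 ≤ a) (ha1 : a ≤ 1) (hε : 0 < ε) (ht : 0 ≤ t) :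
    min ε 1 * t * (2 * ε * t) ^ a ≤ 2 * (ε ^ (2 * a) * t ^ (1 + a)) := by
  have htwo : (2 : ℝ) ^ a ≤ 2 := by simpa using rpow_le_rpow_of_exponent_le one_le_two ha1
  calc min ε 1 * t * (2 * ε * t) ^ a ≤ ε ^ a * t * (2 * ε ^ a * t ^ a) := by
        rw [mul_rpow (by positivity) ht, mul_rpow two_pos.le hε.le]
        gcongr
        exact min_one_le_rpow ha ha1 hε
    _ = 2 * (ε ^ (2 * a) * t ^ (1 + a)) := by
        rw [two_mul a, rpow_add hε, rpow_add_of_nonneg ht zero_le_one ha, rpow_one]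
        ring

end HolderRegularity

section Remainder

variable {d : ℕ} {α ε : ℝ} {x : Ed d}

/-- The vertical term of `⟪∇h(x), z⟫ s_ε(x + z)`, odd under reflection of the last coordinate
of `z`. -/
noncomputable def verticalTerm (d : ℕ) (α ε : ℝ) (x z : Ed d) : ℝ :=
  gradCoef d α x * (lastCoord d x * lastCoord d z * sExit d α ε (x + z))

/-- The horizontal term of `⟪∇h(x), z⟫ s_ε(x + z)` with `s_ε(x + z)` replaced by `s_ε(x)`, so that
it is odd in `z`. -/
noncomputable def horizontalTerm (d : ℕ) (α ε : ℝ) (x z : Ed d) : ℝ :=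
  gradCoef d α x * (⟪tproj d x, z⟫ * sExit d α ε x)

/-- The part of the increment of `h` against `s_ε` that integrates to zero by symmetry. -/
noncomputable def oddPart (d : ℕ) (α ε : ℝ) (x : Ed d) : Ed d → ℝ :=
  (ball 0 (1 / 2)).indicator (verticalTerm d α ε x + horizontalTerm d α ε x)

/-- The increment of `h` against `s_ε` with its odd part removed. -/
noncomputable def remainder (d : ℕ) (α ε : ℝ) (x z : Ed d) : ℝ :=
  (rieszH d α (x + z) - rieszH d α x) * sExit d α ε (x + z) - oddPart d α ε x z

theorem measurable_verticalTerm (x : Ed d) : Measurable (verticalTerm d α ε x) := by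
  have hmeas_s := measurable_sExit (d := d) (α := α) (ε := ε)
  have hmeas_last := (continuous_lastCoord (d := d)).measurable
  unfold verticalTerm
  fun_prop

theorem measurable_horizontalTerm (x : Ed d) : Measurable (horizontalTerm d α ε x) := by
  unfold horizontalTerm
  fun_prop

theorem abs_verticalTerm_le (hd : 2 ≤ d) (hα : 0 < α) (hε : 0 ≤ ε) (x z : Ed d) :
    |verticalTerm d α ε x z| ≤
      |gradCoef d α x| * (|lastCoord d x| * (Cexit d α * ε ^ α)) * ‖z‖ := by
  have hC := Cexit_pos hd hα
  have hs := abs_sExit_le hd hα hε (x + z)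
  have hlast := abs_lastCoord_le (by omega) z
  calc |verticalTerm d α ε x z| =
        |gradCoef d α x| * (|lastCoord d x| * |sExit d α ε (x + z)|) * |lastCoord d z| := by
        rw [verticalTerm, abs_mul, abs_mul, abs_mul]; ring
    _ ≤ _ := by gcongr

theorem abs_horizontalTerm_le (x z : Ed d) :
    |horizontalTerm d α ε x z| ≤ |gradCoef d α x| * (tnorm d x * |sExit d α ε x|) * ‖z‖ := by
  rw [horizontalTerm, abs_mul, abs_mul, mul_assoc, mul_right_comm]
  gcongr
  exact abs_inner_tproj_le_norm x z

theorem integrableOn_verticalTerm {δ : ℝ} (hd : 2 ≤ d) (hα : 0 < α) (hε : 0 ≤ ε) (hδ : 0 < δ)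
    (x : Ed d) :
    IntegrableOn (fun z => (ball 0 (1 / 2)).indicator (verticalTerm d α ε x) z *
      stableKernel d α z) {z | δ < ‖z‖} :=
  integrableOn_indicator_ball_mul_stableKernel (by omega) hα hδ (measurable_verticalTerm x)
    (abs_verticalTerm_le hd hα hε x)

theorem integrableOn_horizontalTerm {δ : ℝ} (hd : 0 < d) (hα : 0 < α) (hδ : 0 < δ) (x : Ed d) :
    IntegrableOn (fun z => (ball 0 (1 / 2)).indicator (horizontalTerm d α ε x) z *
      stableKernel d α z) {z | δ < ‖z‖} :=
  integrableOn_indicator_ball_mul_stableKernel hd hα hδ (measurable_horizontalTerm x)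
    (abs_horizontalTerm_le x)

theorem oddPart_mul_stableKernel (x z : Ed d) :
    oddPart d α ε x z * stableKernel d α z =
      (ball 0 (1 / 2)).indicator (verticalTerm d α ε x) z * stableKernel d α z +
        (ball 0 (1 / 2)).indicator (horizontalTerm d α ε x) z * stableKernel d α z := by
  rw [← add_mul, oddPart, indicator_add', Pi.add_apply]

theorem integrableOn_oddPart {δ : ℝ} (hd : 2 ≤ d) (hα : 0 < α) (hε : 0 ≤ ε) (hδ : 0 < δ)
    (x : Ed d) :
    IntegrableOn (fun z => oddPart d α ε x z * stableKernel d α z) {z | δ < ‖z‖} := by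
  simp_rw [oddPart_mul_stableKernel]
  exact (integrableOn_verticalTerm hd hα hε hδ x).add
    (integrableOn_horizontalTerm (by omega) hα hδ x)

theorem setIntegral_oddPart_eq_zero {δ : ℝ} (hd : 2 ≤ d) (hα : 0 < α) (hε : 0 ≤ ε) (hδ : 0 < δ)
    (x : Ed d) : ∫ z in {z | δ < ‖z‖}, oddPart d α ε x z * stableKernel d α z = 0 := by
  simp_rw [oddPart_mul_stableKernel]
  rw [integral_add (integrableOn_verticalTerm hd hα hε hδ x)
      (integrableOn_horizontalTerm (by omega) hα hδ x),
    setIntegral_indicator_ball_mul_stableKernel_eq_zero (reflLast d) _ _ fun z => by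
      simp [verticalTerm, lastCoord_reflLast, sExit_add_reflLast],
    setIntegral_indicator_ball_mul_stableKernel_eq_zero (LinearIsometryEquiv.neg ℝ) _ _ fun z => by
      simp [horizontalTerm],
    add_zero]

theorem measurable_remainder (x : Ed d) : Measurable (remainder d α ε x) := by
  have hmeas_s := measurable_sExit (d := d) (α := α) (ε := ε)
  have hmeas_h := measurable_rieszH (d := d) (α := α)
  have hmeas_odd : Measurable (oddPart d α ε x) :=
    ((measurable_verticalTerm x).add (measurable_horizontalTerm x)).indicator measurableSet_ball
  unfold remainder
  fun_prop

theorem remainder_eq_of_norm_lt (hd : 0 < d) {z : Ed d} (hz : ‖z‖ < 1 / 2) :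
    remainder d α ε x z =
      (rieszH d α (x + z) - rieszH d α x - gradCoef d α x * ⟪x, z⟫) * sExit d α ε (x + z) +
        gradCoef d α x * (⟪tproj d x, z⟫ * (sExit d α ε (x + z) - sExit d α ε x)) := by
  rw [remainder, oddPart, indicator_of_mem (by simpa using hz), Pi.add_apply, verticalTerm,
    horizontalTerm, inner_eq_tproj_add hd x z]
  ring

theorem abs_gradCoef_mul_inner_mul_sub_le (hd : 2 ≤ d) (hα : 0 < α) (hα2 : α ≤ 2)
    (hx : tnorm d x < ε) (hx1 : 1 ≤ ‖x‖) (z : Ed d) :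
    |gradCoef d α x * (⟪tproj d x, z⟫ * (sExit d α ε (x + z) - sExit d α ε x))| ≤
      2 * |α - d| * Cexit d α * ε ^ α * ‖z‖ ^ (1 + α / 2) := by
  have hαd : α ≤ d := hα2.trans (by exact_mod_cast hd)
  have hC := Cexit_pos hd hα
  have hε : 0 < ε := (tnorm_nonneg x).trans_lt hx
  have hgrad : |gradCoef d α x| * |⟪tproj d x, z⟫| ≤ |α - d| * min ε 1 * ‖z‖ :=
    calc |gradCoef d α x| * |⟪tproj d x, z⟫| ≤ |gradCoef d α x| * (tnorm d x * ‖z‖) := by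
          gcongr; exact abs_inner_tproj_le_norm x z
      _ = |gradCoef d α x| * tnorm d x * ‖z‖ := (mul_assoc _ _ _).symm
      _ ≤ |α - d| * min (tnorm d x) 1 * ‖z‖ :=
          mul_le_mul_of_nonneg_right (abs_gradCoef_mul_tnorm_le hαd hx1) (norm_nonneg z)
      _ ≤ |α - d| * min ε 1 * ‖z‖ := by gcongr
  have hpow := min_one_mul_rpow_le (a := α / 2) (by positivity) (by linarith) hε (norm_nonneg z)
  rw [mul_div_cancel₀ α two_ne_zero] at hpow
  calc _ = |gradCoef d α x| * |⟪tproj d x, z⟫| * |sExit d α ε (x + z) - sExit d α ε x| := by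
        rw [abs_mul, abs_mul, mul_assoc]
    _ ≤ |α - d| * min ε 1 * ‖z‖ * (Cexit d α * (2 * ε * ‖z‖) ^ (α / 2)) := by
        gcongr; exact abs_sExit_sub_le hd hα hα2 hx z
    _ = |α - d| * Cexit d α * (min ε 1 * ‖z‖ * (2 * ε * ‖z‖) ^ (α / 2)) := by ring
    _ ≤ |α - d| * Cexit d α * (2 * (ε ^ α * ‖z‖ ^ (1 + α / 2))) := by gcongr
    _ = _ := by ring

theorem exists_abs_remainder_le_of_norm_lt (hd : 2 ≤ d) (hα : 0 < α) (hα2 : α ≤ 2) :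
    ∃ K : ℝ, 0 ≤ K ∧ ∀ (ε : ℝ) (x z : Ed d), tnorm d x < ε → 1 ≤ ‖x‖ → ‖z‖ < 1 / 2 →
      |remainder d α ε x z| ≤ K * ε ^ α * ‖z‖ ^ (1 + α / 2) := by
  have hC := Cexit_pos hd hα
  obtain ⟨K, hK, htaylor⟩ := exists_rieszH_taylor_bound (hα2.trans (by exact_mod_cast hd))
  refine ⟨K * Cexit d α + 2 * |α - d| * Cexit d α, by positivity, fun ε x z hx hx1 hz => ?_⟩
  have hε : 0 < ε := (tnorm_nonneg x).trans_lt hx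
  have hpow : ‖z‖ ^ 2 ≤ ‖z‖ ^ (1 + α / 2) := by
    rw [← rpow_two]
    exact rpow_le_rpow_of_exponent_ge' (norm_nonneg z) (by linarith) (by linarith) (by linarith)
  have hquadratic : |(rieszH d α (x + z) - rieszH d α x - gradCoef d α x * ⟪x, z⟫) *
      sExit d α ε (x + z)| ≤ K * ‖z‖ ^ (1 + α / 2) * (Cexit d α * ε ^ α) := by
    rw [abs_mul]
    exact mul_le_mul ((htaylor x z hx1 hz.le).trans (by gcongr))
      (abs_sExit_le hd hα hε.le _) (abs_nonneg _) (by positivity)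
  rw [remainder_eq_of_norm_lt (by omega) hz]
  calc _ ≤ K * ‖z‖ ^ (1 + α / 2) * (Cexit d α * ε ^ α) +
        2 * |α - d| * Cexit d α * ε ^ α * ‖z‖ ^ (1 + α / 2) :=
        (abs_add_le _ _).trans (add_le_add hquadratic
          (abs_gradCoef_mul_inner_mul_sub_le hd hα hα2 hx hx1 z))
    _ = _ := by ring

/-- The function dominating the remainder against the kernel, up to a factor `K ε^α`: the first
term controls it near the origin and at infinity, the second one at the pole of `h`. -/
noncomputable def remainderMajorant (d : ℕ) (α : ℝ) (x z : Ed d) : ℝ :=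
  min (‖z‖ ^ (1 + α / 2)) 1 * stableKernel d α z + (ball 0 1).indicator (rieszH d α) (x + z)

theorem indicator_ball_rieszH_nonneg (y : Ed d) : 0 ≤ (ball 0 1).indicator (rieszH d α) y :=
  indicator_nonneg (fun y _ => rieszH_nonneg y) _

theorem remainderMajorant_nonneg (x z : Ed d) : 0 ≤ remainderMajorant d α x z :=
  add_nonneg (mul_nonneg (by positivity) (stableKernel_nonneg z)) (indicator_ball_rieszH_nonneg _)

theorem integrable_remainderMajorant (hd : 0 < d) (hα : 0 < α) (hα2 : α < 2) (x : Ed d) :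
    Integrable (remainderMajorant d α x) :=
  (integrable_min_mul_stableKernel hd hα (by linarith)).add
    ((integrable_indicator_ball_rieszH hd hα).comp_add_left x)

theorem integral_remainderMajorant (hd : 0 < d) (hα : 0 < α) (hα2 : α < 2) (x : Ed d) :
    ∫ z, remainderMajorant d α x z = ∫ z, remainderMajorant d α 0 z := by
  have hsplit := fun y : Ed d => integral_add
    (integrable_min_mul_stableKernel (d := d) hd hα (κ := 1 + α / 2) (by linarith))
    ((integrable_indicator_ball_rieszH hd hα).comp_add_left y)
  simp only [remainderMajorant]
  rw [hsplit x, hsplit 0, integral_add_left_eq_self, integral_add_left_eq_self]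

theorem rieszH_le_one_add_indicator (hα : α ≤ d) (y : Ed d) :
    rieszH d α y ≤ 1 + (ball 0 1).indicator (rieszH d α) y := by
  by_cases hy : y ∈ ball (0 : Ed d) 1
  · rw [indicator_of_mem hy]
    linarith
  · rw [indicator_of_notMem hy, add_zero]
    exact rieszH_le_one hα (by simpa using hy)

theorem one_le_four_mul_min_rpow {a t : ℝ} (ha : 0 ≤ a) (ha2 : a ≤ 2) (ht : 1 / 2 ≤ t) :
    1 ≤ 4 * min (t ^ a) 1 := by
  have hquarter : (1 / 4 : ℝ) ≤ t ^ a :=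
    calc (1 / 4 : ℝ) = (1 / 2) ^ (2 : ℝ) := by norm_num
      _ ≤ (1 / 2) ^ a := rpow_le_rpow_of_exponent_ge (by norm_num) (by norm_num) ha2
      _ ≤ t ^ a := by gcongr
  linarith [le_min hquarter (by norm_num : (1 / 4 : ℝ) ≤ 1)]

theorem stableKernel_le_two_rpow (hα : 0 ≤ α) {z : Ed d} (hz : 1 / 2 ≤ ‖z‖) :
    stableKernel d α z ≤ 2 ^ (d + α) :=
  calc ‖z‖ ^ (-(d : ℝ) - α) ≤ (1 / 2 : ℝ) ^ (-(d : ℝ) - α) :=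
        rpow_le_rpow_of_nonpos (by norm_num) hz (by linarith [d.cast_nonneg (α := ℝ)])
    _ = 2 ^ (d + α) := by
        rw [one_div, inv_rpow zero_le_two, ← rpow_neg zero_le_two]; congr 1; ring

theorem abs_remainder_mul_stableKernel_le_of_le_norm (hd : 2 ≤ d) (hα : 0 < α) (hα2 : α ≤ 2)
    (hε : 0 ≤ ε) {z : Ed d} (hx1 : 1 ≤ ‖x‖) (hz : 1 / 2 ≤ ‖z‖) :
    |remainder d α ε x z| * stableKernel d α z ≤
      Cexit d α * (8 + 2 ^ (d + α)) * ε ^ α * remainderMajorant d α x z := by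
  have hαd : α ≤ d := hα2.trans (by exact_mod_cast hd)
  have hC := Cexit_pos hd hα
  have hx := rieszH_le_one hαd hx1
  have hx0 := rieszH_nonneg (α := α) x
  have hxz0 := rieszH_nonneg (α := α) (x + z)
  have hk0 := stableKernel_nonneg (α := α) z
  have hball0 := indicator_ball_rieszH_nonneg (α := α) (x + z)
  have hrem : |remainder d α ε x z| ≤ (rieszH d α (x + z) + 1) * (Cexit d α * ε ^ α) := by
    rw [remainder, oddPart, indicator_of_notMem (by simpa using hz), sub_zero, abs_mul]
    refine mul_le_mul (abs_le.2 ⟨?_, ?_⟩) (abs_sExit_le hd hα hε _) (abs_nonneg _) (by positivity)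
      <;> linarith
  have hmin := mul_le_mul_of_nonneg_right
    (one_le_four_mul_min_rpow (a := 1 + α / 2) (by linarith) (by linarith) hz) hk0
  have hpole := mul_le_mul_of_nonneg_right (stableKernel_le_two_rpow hα.le hz) hball0
  have hmajorant : (rieszH d α (x + z) + 1) * stableKernel d α z ≤
      (8 + 2 ^ (d + α)) * remainderMajorant d α x z := by
    have hh := mul_le_mul_of_nonneg_right (rieszH_le_one_add_indicator hαd (x + z)) hk0
    have hmin0 : 0 ≤ 2 ^ (d + α) * (min (‖z‖ ^ (1 + α / 2)) 1 * stableKernel d α z) := by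
      positivity
    rw [remainderMajorant]
    linarith
  calc |remainder d α ε x z| * stableKernel d α z
      ≤ (rieszH d α (x + z) + 1) * (Cexit d α * ε ^ α) * stableKernel d α z := by gcongr
    _ = Cexit d α * ε ^ α * ((rieszH d α (x + z) + 1) * stableKernel d α z) := by ring
    _ ≤ Cexit d α * ε ^ α * ((8 + 2 ^ (d + α)) * remainderMajorant d α x z) := by gcongr
    _ = _ := by ring

theorem exists_abs_remainder_mul_stableKernel_le (hd : 2 ≤ d) (hα : 0 < α) (hα2 : α ≤ 2) :
    ∃ K : ℝ, 0 ≤ K ∧ ∀ (ε : ℝ) (x z : Ed d), tnorm d x < ε → 1 ≤ ‖x‖ →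
      |remainder d α ε x z * stableKernel d α z| ≤ K * ε ^ α * remainderMajorant d α x z := by
  have hC := Cexit_pos hd hα
  obtain ⟨K, hK, hnear⟩ := exists_abs_remainder_le_of_norm_lt hd hα hα2
  refine ⟨max K (Cexit d α * (8 + 2 ^ (d + α))), le_max_of_le_left hK, fun ε x z hx hx1 => ?_⟩
  have hε : 0 < ε := (tnorm_nonneg x).trans_lt hx
  have hk0 := stableKernel_nonneg (α := α) z
  have hmaj0 := remainderMajorant_nonneg (α := α) x z
  rw [abs_mul, abs_of_nonneg hk0]
  rcases lt_or_ge ‖z‖ (1 / 2) with hz | hz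
  · have hmin : ‖z‖ ^ (1 + α / 2) * stableKernel d α z ≤ remainderMajorant d α x z := by
      rw [remainderMajorant, min_eq_left
        (rpow_le_one (norm_nonneg z) (by linarith) (by linarith))]
      exact le_add_of_nonneg_right (indicator_ball_rieszH_nonneg _)
    calc |remainder d α ε x z| * stableKernel d α z
        ≤ K * ε ^ α * ‖z‖ ^ (1 + α / 2) * stableKernel d α z := by
          gcongr; exact hnear ε x z hx hx1 hz
      _ = K * ε ^ α * (‖z‖ ^ (1 + α / 2) * stableKernel d α z) := mul_assoc _ _ _
      _ ≤ _ := by gcongr; exact le_max_left _ _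
  · refine (abs_remainder_mul_stableKernel_le_of_le_norm hd hα hα2 hε.le hx1 hz).trans ?_
    gcongr
    exact le_max_right _ _

theorem exists_abs_integral_remainder_le (hd : 2 ≤ d) (hα : 0 < α) (hα2 : α < 2) :
    ∃ C : ℝ, 0 ≤ C ∧ ∀ (ε : ℝ) (x : Ed d), tnorm d x < ε → 1 ≤ ‖x‖ →
      Integrable (fun z => remainder d α ε x z * stableKernel d α z) ∧
        |∫ z, remainder d α ε x z * stableKernel d α z| ≤ C * ε ^ α := by
  obtain ⟨K, hK, hle⟩ := exists_abs_remainder_mul_stableKernel_le hd hα hα2.le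
  refine ⟨K * ∫ z : Ed d, remainderMajorant d α 0 z,
    mul_nonneg hK (integral_nonneg (remainderMajorant_nonneg 0)), fun ε x hx hx1 => ?_⟩
  have hmaj := (integrable_remainderMajorant (by omega) hα hα2 x).const_mul (K * ε ^ α)
  have hae := ae_of_all volume fun z => hle ε x z hx hx1
  refine ⟨hmaj.mono'
    ((measurable_remainder x).mul measurable_stableKernel).aestronglyMeasurable hae,
    (norm_integral_le_of_norm_le (f := fun z => remainder d α ε x z * stableKernel d α z)
      hmaj hae).trans_eq ?_⟩
  rw [integral_const_mul, integral_remainderMajorant (by omega) hα hα2]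
  ring

theorem fracLapAt_rieszH_mul_sExit (hd : 2 ≤ d) (hα : 0 < α) (hα2 : α < 2) (hx : tnorm d x < ε)
    (hrem : Integrable fun z => remainder d α ε x z * stableKernel d α z) :
    fracLapAt d α (fun y => rieszH d α y * sExit d α ε y) x
      (rieszH d α x * -1 + fracConst d α * ∫ z, remainder d α ε x z * stableKernel d α z) := by
  have hε : 0 ≤ ε := (tnorm_nonneg x).trans hx.le
  have hmeas := measurable_sExit (d := d) (α := α) (ε := ε)
  exact fracLapAt_mul (by omega) (fracLapAt_sExit hd hα hα2 hx)
    (fun δ hδ => integrableOn_mul_stableKernel (by omega) hα hδ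
      (f := fun z => sExit d α ε (x + z) - sExit d α ε x) (by fun_prop)
      fun z => (abs_sub _ _).trans (add_le_add (abs_sExit_le hd hα hε _)
        (abs_sExit_le hd hα hε _)))
    (fun δ hδ => integrableOn_oddPart hd hα hε hδ x)
    (fun δ hδ => setIntegral_oddPart_eq_zero hd hα hε hδ x)
    hrem fun z => by rw [remainder]; ring

end Remainder

theorem one_le_norm_of_mem_hyperF {d : ℕ} (hd : 0 < d) {x : Ed d} (hx : x ∈ hyperF d) :
    1 ≤ ‖x‖ := by
  simpa [show lastCoord d x = 1 from hx] using abs_lastCoord_le hd x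

theorem rpow_le_omegaFn {α ε : ℝ} (hε : 0 < ε) (hε1 : ε ≤ rexp (-1)) : ε ^ α ≤ omegaFn α ε := by
  have hε_one : ε ≤ 1 := hε1.trans (exp_le_one_iff.2 (by norm_num))
  unfold omegaFn
  split_ifs with hlt heq
  · exact le_rfl
  · have hlog : log ε ≤ -1 := (log_le_iff_le_exp hε).2 hε1
    rw [heq, rpow_one]
    exact le_mul_of_one_le_right hε.le (le_abs.2 (Or.inr (by linarith)))
  · simpa using rpow_le_rpow_of_exponent_ge hε hε_one (not_lt.1 hlt)

theorem one_div_twenty_le_exp_neg_one : (1 / 20 : ℝ) ≤ rexp (-1) := by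
  rw [exp_neg, ← one_div]
  exact one_div_le_one_div_of_le (exp_pos 1) (by linarith [exp_one_lt_three])

theorem fracLap_h_sExit_general (d : ℕ) (hd : 2 ≤ d) (α : ℝ) (hα : 0 < α) (hα2 : α < 2) :
    ∃ C : ℝ, 0 < C ∧ ∀ ε : ℝ, ∀ x ∈ cylPi d ε, 1 ≤ ‖x‖ →
      ∃ L : ℝ, fracLapAt d α (fun y => rieszH d α y * sExit d α ε y) x L ∧
        |L + rieszH d α x| ≤ C * ε ^ α := by
  obtain ⟨C, hC, hrem⟩ := exists_abs_integral_remainder_le hd hα hα2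
  refine ⟨|fracConst d α| * C + 1, by positivity, fun ε x hx hx1 => ?_⟩
  obtain ⟨hint, hbound⟩ := hrem ε x hx hx1
  refine ⟨_, fracLapAt_rieszH_mul_sExit hd hα hα2 hx hint, ?_⟩
  have hpow : 0 ≤ ε ^ α := rpow_nonneg ((tnorm_nonneg x).trans (le_of_lt hx)) α
  rw [mul_neg_one, neg_add_cancel_comm, abs_mul]
  calc |fracConst d α| * |∫ z, remainder d α ε x z * stableKernel d α z|
      ≤ |fracConst d α| * (C * ε ^ α) := by gcongr
    _ ≤ (|fracConst d α| * C + 1) * ε ^ α := by linarith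

/-- `Δ^{α/2}(h s_ε)(x) = -h(x) + O(ω(ε))` for `x ∈ Π_ε ∩ F`. -/
theorem fracLap_h_sExit (d : ℕ) (hd : 2 ≤ d) (α : ℝ) (hα : 0 < α) (hα2 : α < 2) :
    ∃ C : ℝ, 0 < C ∧ ∀ ε ∈ Set.Ioo (0 : ℝ) (1 / 20), ∀ x ∈ cylPi d ε ∩ hyperF d,
      ∃ L : ℝ, fracLapAt d α (fun y => rieszH d α y * sExit d α ε y) x L ∧
        |L + rieszH d α x| ≤ C * omegaFn α ε := by
  obtain ⟨C, hC, hbound⟩ := fracLap_h_sExit_general d hd α hα hα2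
  refine ⟨C, hC, fun ε hε x hx => ?_⟩
  obtain ⟨L, hL, hLh⟩ := hbound ε x hx.1 (one_le_norm_of_mem_hyperF (by omega) hx.2)
  refine ⟨L, hL, hLh.trans (mul_le_mul_of_nonneg_left (rpow_le_omegaFn hε.1 ?_) hC.le)⟩
  exact hε.2.le.trans one_div_twenty_le_exp_neg_one
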